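/- Let ρ^{ABCD} be a state of a quadripartite quantum system on finite-dimensional Hilbert spaces satisfying I(A;C|B) = 0, I(B;C|A) = 0 and I(A;B|CD) = 0. Then S(C|AB) + S(C|ABD) ≥ 0. -/

import Mathlib

open scoped BigOperators ComplexOrder

/-- Von Neumann entropy (base 2) of a matrix: for a Hermitian matrix, the Shannon
entropy of its eigenvalues; junk value `0` for non-Hermitian matrices. -/
noncomputable def vNEntropy {n : Type*} [Fintype n] [DecidableEq n] (M : Matrix n n ℂ) : ℝ :=
  if h : M.IsHermitian then -∑ i, (h.eigenvalues i) * Real.logb 2 (h.eigenvalues i) else 0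

/-- A density matrix: positive semidefinite with trace one. -/
def IsState {n : Type*} [Fintype n] [DecidableEq n] (M : Matrix n n ℂ) : Prop :=
  M.PosSemidef ∧ M.trace = 1

section Quad

variable {A B C D : Type*} [Fintype A] [DecidableEq A] [Fintype B] [DecidableEq B]
  [Fintype C] [DecidableEq C] [Fintype D] [DecidableEq D]
  (ρ : Matrix (A × B × C × D) (A × B × C × D) ℂ)

/-- Entropies of the 15 marginals of a quadripartite state. -/
noncomputable def SA : ℝ :=
  vNEntropy (Matrix.of fun a a' : A => ∑ b, ∑ c, ∑ d, ρ (a, b, c, d) (a', b, c, d))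
noncomputable def SB : ℝ :=
  vNEntropy (Matrix.of fun b b' : B => ∑ a, ∑ c, ∑ d, ρ (a, b, c, d) (a, b', c, d))
noncomputable def SC : ℝ :=
  vNEntropy (Matrix.of fun c c' : C => ∑ a, ∑ b, ∑ d, ρ (a, b, c, d) (a, b, c', d))
noncomputable def SD : ℝ :=
  vNEntropy (Matrix.of fun d d' : D => ∑ a, ∑ b, ∑ c, ρ (a, b, c, d) (a, b, c, d'))
noncomputable def SAB : ℝ :=
  vNEntropy (Matrix.of fun p q : A × B => ∑ c, ∑ d, ρ (p.1, p.2, c, d) (q.1, q.2, c, d))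
noncomputable def SAC : ℝ :=
  vNEntropy (Matrix.of fun p q : A × C => ∑ b, ∑ d, ρ (p.1, b, p.2, d) (q.1, b, q.2, d))
noncomputable def SAD : ℝ :=
  vNEntropy (Matrix.of fun p q : A × D => ∑ b, ∑ c, ρ (p.1, b, c, p.2) (q.1, b, c, q.2))
noncomputable def SBC : ℝ :=
  vNEntropy (Matrix.of fun p q : B × C => ∑ a, ∑ d, ρ (a, p.1, p.2, d) (a, q.1, q.2, d))
noncomputable def SBD : ℝ :=
  vNEntropy (Matrix.of fun p q : B × D => ∑ a, ∑ c, ρ (a, p.1, c, p.2) (a, q.1, c, q.2))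
noncomputable def SCD : ℝ :=
  vNEntropy (Matrix.of fun p q : C × D => ∑ a, ∑ b, ρ (a, b, p.1, p.2) (a, b, q.1, q.2))
noncomputable def SABC : ℝ :=
  vNEntropy (Matrix.of fun p q : A × B × C =>
    ∑ d, ρ (p.1, p.2.1, p.2.2, d) (q.1, q.2.1, q.2.2, d))
noncomputable def SABD : ℝ :=
  vNEntropy (Matrix.of fun p q : A × B × D =>
    ∑ c, ρ (p.1, p.2.1, c, p.2.2) (q.1, q.2.1, c, q.2.2))
noncomputable def SACD : ℝ :=
  vNEntropy (Matrix.of fun p q : A × C × D =>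
    ∑ b, ρ (p.1, b, p.2.1, p.2.2) (q.1, b, q.2.1, q.2.2))
noncomputable def SBCD : ℝ :=
  vNEntropy (Matrix.of fun p q : B × C × D =>
    ∑ a, ρ (a, p.1, p.2.1, p.2.2) (a, q.1, q.2.1, q.2.2))
noncomputable def SABCD : ℝ := vNEntropy ρ

end Quad

/-!
Purify `ρ` by a system `E`. Complementary marginals of a pure state have equal entropy, so the claim
becomes `S(C|E) ≤ S(C|AB)` for the marginal on `ABCE`, under the hypotheses
`I(A;C|B) = I(B;C|A) = 0` and `I(A;B|E) = 0`.

*Equality in strong subadditivity.* The derivative in `s` of `tr ρ log (σ + s ρ)`, read with left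
multiplication by `σ` and right multiplication by `ρ`, is the maximum of a quadratic functional.
Restricting that functional to operators `1 ⊗ Y` yields the one for the reduced operators, so
integration over `s` gives monotonicity of the relative entropy, hence strong subadditivity. In case
of equality the maximisers agree for all `s > 0`; the limits `s → ∞` and `s → 0` yield
`supp ρ_XY · supp ρ_YZ = supp ρ_XYZ` and `ρ_XY ρ_Y⁻¹ ρ_YZ = ρ_XYZ`.

*The common classical register.* From `I(A;C|B) = I(B;C|A) = 0` the blocks of `ρ_ABC` with respect
to `C` are both `ρ_AB (1 ⊗ x c c')` and `ρ_AB (x' c c' ⊗ 1)`. As operators on `A` commute with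
operators on `B`, a trace computation shows that the `x c c'` form a commuting family that also
commutes with `ρ_B`. Its joint spectral projections are projective measurements on `A` and on `B`
that always give the same outcome `J`, and `J` carries all that `AB` knows about `C`:
`S(C|J) = S(C|B) = S(C|AB)`.

*Reading the register from `E`.* Measurements on `A` and on `B` that always agree, together with
`I(A;B|E) = 0`, force the states of `E` conditioned on distinct outcomes to be orthogonal, by the
support identity above. Therefore `S(CE) = S(CJE)` and `S(E) = S(JE)`, and strong subadditivity for
`CJE` gives `S(C|E) = S(C|JE) ≤ S(C|J) = S(C|AB)`.
-/

namespace QuantumMarkov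

open Matrix Filter Topology
open scoped Kronecker

/-! ### Functional calculus and entropy of Hermitian matrices -/

section FunctionalCalculus

variable {m n : Type*} [Fintype m] [DecidableEq m] [Fintype n] [DecidableEq n]

lemma continuousOn_spectrum (f : ℝ → ℝ) (M : Matrix n n ℂ) : ContinuousOn f (spectrum ℝ M) :=
  finite_real_spectrum.continuousOn f

lemma cfc_mul_cfc (f g : ℝ → ℝ) (M : Matrix n n ℂ) :
    cfc f M * cfc g M = cfc (fun x => f x * g x) M :=
  (cfc_mul f g M (continuousOn_spectrum f M) (continuousOn_spectrum g M)).symm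

lemma isHermitian_cfc (f : ℝ → ℝ) (M : Matrix n n ℂ) : (cfc f M).IsHermitian :=
  cfc_predicate f M

lemma starAlgHom_map_cfc (φ : Matrix m m ℂ →⋆ₐ[ℂ] Matrix n n ℂ) (f : ℝ → ℝ) {M : Matrix m m ℂ}
    (hM : M.IsHermitian) : φ (cfc f M) = cfc f (φ M) :=
  φ.map_cfc f M (continuousOn_spectrum f M)
    (LinearMap.continuous_of_finiteDimensional φ.toAlgHom.toLinearMap) hM
    (hM.isSelfAdjoint.map φ)

lemma cfc_eq_conj_diagonal (f : ℝ → ℝ) {M : Matrix n n ℂ} (hM : M.IsHermitian) :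
    cfc f M = (hM.eigenvectorUnitary : Matrix n n ℂ) *
      diagonal (fun i => (f (hM.eigenvalues i) : ℂ)) * (hM.eigenvectorUnitary : Matrix n n ℂ)ᴴ := by
  rw [hM.cfc_eq, IsHermitian.cfc, Unitary.conjStarAlgAut_apply]
  rfl

lemma trace_cfc (f : ℝ → ℝ) {M : Matrix n n ℂ} (hM : M.IsHermitian) :
    (cfc f M).trace = ∑ i, (f (hM.eigenvalues i) : ℂ) := by
  rw [cfc_eq_conj_diagonal f hM, trace_mul_cycle, ← star_eq_conjTranspose,
    Unitary.coe_star_mul_self, one_mul, trace_diagonal]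

/-- The projection onto the range of a Hermitian matrix (`0` if `M` is not Hermitian). -/
noncomputable def supportProj (M : Matrix n n ℂ) : Matrix n n ℂ :=
  cfc (fun x : ℝ => if x = 0 then 0 else 1) M

/-- The pseudo-inverse of a Hermitian matrix: the convention `0⁻¹ = 0` makes it vanish on the
kernel (`0` if `M` is not Hermitian). -/
noncomputable def pinv (M : Matrix n n ℂ) : Matrix n n ℂ :=
  cfc (fun x : ℝ => x⁻¹) M

lemma supportProj_isHermitian (M : Matrix n n ℂ) : (supportProj M).IsHermitian :=
  isHermitian_cfc _ M

lemma pinv_isHermitian (M : Matrix n n ℂ) : (pinv M).IsHermitian :=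
  isHermitian_cfc _ M

lemma supportProj_mul_cfc {f : ℝ → ℝ} (hf : f 0 = 0) (M : Matrix n n ℂ) :
    supportProj M * cfc f M = cfc f M := by
  rw [supportProj, cfc_mul_cfc]
  congr 1 with x
  split_ifs with hx <;> simp [hx, hf]

lemma supportProj_mul_self {M : Matrix n n ℂ} (hM : M.IsHermitian) : supportProj M * M = M := by
  have h := supportProj_mul_cfc (f := id) rfl M
  rwa [cfc_id ℝ M hM.isSelfAdjoint] at h

lemma self_mul_supportProj {M : Matrix n n ℂ} (hM : M.IsHermitian) : M * supportProj M = M := by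
  have h := congrArg conjTranspose (supportProj_mul_self hM)
  rwa [conjTranspose_mul, hM.eq, (supportProj_isHermitian M).eq] at h

lemma supportProj_mul_supportProj (M : Matrix n n ℂ) :
    supportProj M * supportProj M = supportProj M :=
  supportProj_mul_cfc (f := fun x => if x = 0 then 0 else 1) (if_pos rfl) M

lemma supportProj_mul_pinv (M : Matrix n n ℂ) : supportProj M * pinv M = pinv M :=
  supportProj_mul_cfc inv_zero M

lemma pinv_mul_self {M : Matrix n n ℂ} (hM : M.IsHermitian) : pinv M * M = supportProj M := by
  have h := cfc_mul_cfc (fun x => x⁻¹) id M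
  rw [cfc_id ℝ M hM.isSelfAdjoint] at h
  rw [pinv, h, supportProj]
  congr 1 with x
  split_ifs with hx <;> simp [hx]

lemma self_mul_pinv {M : Matrix n n ℂ} (hM : M.IsHermitian) : M * pinv M = supportProj M := by
  have h := congrArg conjTranspose (pinv_mul_self hM)
  rwa [conjTranspose_mul, hM.eq, (supportProj_isHermitian M).eq, (pinv_isHermitian M).eq] at h

lemma supportProj_mul_eq_zero {l : Type*} {M : Matrix n n ℂ} (hM : M.IsHermitian)
    {T : Matrix n l ℂ} (h : M * T = 0) : supportProj M * T = 0 := by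
  rw [← pinv_mul_self hM, Matrix.mul_assoc, h, Matrix.mul_zero]

lemma mul_supportProj_eq_zero {l : Type*} {M : Matrix n n ℂ} (hM : M.IsHermitian)
    {T : Matrix l n ℂ} (h : T * M = 0) : T * supportProj M = 0 := by
  rw [← self_mul_pinv hM, ← Matrix.mul_assoc, h, Matrix.zero_mul]

lemma supportProj_posSemidef (M : Matrix n n ℂ) : (supportProj M).PosSemidef := by
  have h := posSemidef_conjTranspose_mul_self (supportProj M)
  rwa [(supportProj_isHermitian M).eq, supportProj_mul_supportProj] at h

end FunctionalCalculus

section Entropy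

open Polynomial

variable {m n : Type*} [Fintype m] [Fintype n]

open scoped MatrixOrder Matrix.Norms.L2Operator in
lemma exists_eq_conjTranspose_mul_self {M : Matrix n n ℂ} (hM : M.PosSemidef) :
    ∃ B : Matrix n n ℂ, M = Bᴴ * B := by
  classical exact CStarAlgebra.nonneg_iff_eq_star_mul_self.mp hM.nonneg

lemma mul_eq_zero_of_re_trace_conj {l : Type*} [Fintype l] {M : Matrix n n ℂ} (hM : M.PosSemidef)
    {T : Matrix l n ℂ} (h : (T * M * Tᴴ).trace.re = 0) : T * M = 0 := by
  replace h : (T * M * Tᴴ).trace = 0 :=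
    Complex.ext h (Complex.nonneg_iff.mp (hM.mul_mul_conjTranspose_same T).trace_nonneg).2.symm
  obtain ⟨B, rfl⟩ := exists_eq_conjTranspose_mul_self hM
  have hsq : T * (Bᴴ * B) * Tᴴ = (T * Bᴴ) * (T * Bᴴ)ᴴ := by
    simp only [conjTranspose_mul, conjTranspose_conjTranspose, Matrix.mul_assoc]
  rw [hsq, trace_mul_conjTranspose_self_eq_zero_iff] at h
  rw [← Matrix.mul_assoc, h, Matrix.zero_mul]

variable [DecidableEq m] [DecidableEq n]

lemma vNEntropy_mul_log_two {M : Matrix n n ℂ} (hM : M.IsHermitian) :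
    vNEntropy M * Real.log 2 = -(M * cfc Real.log M).trace.re := by
  have hlog : M * cfc Real.log M = cfc (fun x => x * Real.log x) M := by
    rw [← cfc_mul_cfc (fun x => x) Real.log M, cfc_id' ℝ M hM.isSelfAdjoint]
  rw [hlog, trace_cfc _ hM, vNEntropy, dif_pos hM, neg_mul, Finset.sum_mul, Complex.re_sum]
  congr! 2 with i
  rw [Complex.ofReal_re, mul_assoc, Real.logb, div_mul_cancel₀ _ (Real.log_pos one_lt_two).ne']

lemma vNEntropy_eq_sum_roots {M : Matrix n n ℂ} (hM : M.IsHermitian) :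
    vNEntropy M = (M.charpoly.roots.map fun z : ℂ => -(z.re * Real.logb 2 z.re)).sum := by
  rw [hM.roots_charpoly_eq_eigenvalues, vNEntropy, dif_pos hM, Multiset.map_map,
    ← Finset.sum_neg_distrib]
  rfl

lemma vNEntropy_submatrix {M : Matrix n n ℂ} (hM : M.IsHermitian) (e : m ≃ n) :
    vNEntropy (M.submatrix e e) = vNEntropy M := by
  have h := charpoly_reindex e.symm M
  rw [reindex_apply, Equiv.symm_symm] at h
  rw [vNEntropy_eq_sum_roots hM, vNEntropy_eq_sum_roots (hM.submatrix e), h]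

lemma vNEntropy_transpose {M : Matrix n n ℂ} (hM : M.IsHermitian) :
    vNEntropy Mᵀ = vNEntropy M := by
  rw [vNEntropy_eq_sum_roots hM, vNEntropy_eq_sum_roots hM.transpose, charpoly_transpose]

-- The two characteristic polynomials differ by a power of the variable, and zero eigenvalues do not
-- contribute to the entropy.
lemma vNEntropy_mul_conjTranspose (M : Matrix m n ℂ) :
    vNEntropy (M * Mᴴ) = vNEntropy (Mᴴ * M) := by
  have h := congrArg (fun P : ℂ[X] => (P.roots.map fun z : ℂ => -(z.re * Real.logb 2 z.re)).sum)
    (charpoly_mul_comm' M Mᴴ)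
  have hl : X ^ Fintype.card n * (M * Mᴴ).charpoly ≠ 0 :=
    ((monic_X_pow _).mul (charpoly_monic _)).ne_zero
  have hr : X ^ Fintype.card m * (Mᴴ * M).charpoly ≠ 0 :=
    ((monic_X_pow _).mul (charpoly_monic _)).ne_zero
  rw [vNEntropy_eq_sum_roots (isHermitian_mul_conjTranspose_self M),
    vNEntropy_eq_sum_roots (isHermitian_conjTranspose_mul_self M)]
  simpa [roots_mul hl, roots_mul hr, Multiset.map_nsmul, Multiset.sum_nsmul] using h

end Entropy

/-! ### Partial traces and ampliations -/

section Blocks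

variable {n m x y z : Type*}

/-- The `(c, c')` block of a matrix on `n ≃ m × z`, with respect to the factor `z`. -/
def block (e : n ≃ m × z) (M : Matrix n n ℂ) (c c' : z) : Matrix m m ℂ :=
  M.submatrix (fun a => e.symm (a, c)) (fun a => e.symm (a, c'))

lemma ext_block (e : n ≃ m × z) {M N : Matrix n n ℂ}
    (h : ∀ c c', block e M c c' = block e N c c') : M = N := by
  ext i j
  have hij := congrFun (congrFun (h (e i).2 (e j).2) (e i).1) (e j).1
  simpa only [block, submatrix_apply, Prod.mk.eta, Equiv.symm_apply_apply] using hij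

lemma conjTranspose_block (e : n ≃ m × z) (M : Matrix n n ℂ) (c c' : z) :
    (block e M c c')ᴴ = block e Mᴴ c' c :=
  conjTranspose_submatrix M _ _

/-- The partial trace over the factor `z` of a matrix on `n ≃ m × z`. -/
def ptrace [Fintype z] (e : n ≃ m × z) : Matrix n n ℂ →ₗ[ℂ] Matrix m m ℂ where
  toFun M := ∑ c, block e M c c
  map_add' M N := by simp only [block, submatrix_add, Pi.add_apply, Finset.sum_add_distrib]
  map_smul' r M := by simp only [block, submatrix_smul, Pi.smul_apply, Finset.smul_sum,
    RingHom.id_apply]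

lemma ptrace_eq_sum_block [Fintype z] (e : n ≃ m × z) (M : Matrix n n ℂ) :
    ptrace e M = ∑ c, block e M c c :=
  rfl

lemma ptrace_apply [Fintype z] (e : n ≃ m × z) (M : Matrix n n ℂ) (a a' : m) :
    ptrace e M a a' = ∑ c, M (e.symm (a, c)) (e.symm (a', c)) := by
  rw [ptrace_eq_sum_block, Matrix.sum_apply]
  rfl

lemma ptrace_posSemidef [Fintype z] (e : n ≃ m × z) {M : Matrix n n ℂ} (hM : M.PosSemidef) :
    (ptrace e M).PosSemidef :=
  posSemidef_sum _ fun _ _ => hM.submatrix _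

lemma trace_ptrace [Fintype n] [Fintype m] [Fintype z] (e : n ≃ m × z) (M : Matrix n n ℂ) :
    (ptrace e M).trace = M.trace := by
  simp only [trace, diag_apply, ptrace_apply, ← Fintype.sum_prod_type']
  exact e.symm.sum_comp fun i => M i i

/-- The regrouping of `(y × x) × z` as `(y × z) × x`, along `e : n ≃ m × z` and `f : m ≃ y × x`. -/
def regroup (e : n ≃ m × z) (f : m ≃ y × x) : n ≃ (y × z) × x where
  toFun i := (((f (e i).1).1, (e i).2), (f (e i).1).2)
  invFun t := e.symm (f.symm (t.1.1, t.2), t.1.2)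
  left_inv i := by simp
  right_inv t := by simp

lemma block_refl_ptrace_regroup [Fintype x] (e : n ≃ m × z) (f : m ≃ y × x) (M : Matrix n n ℂ)
    (c c' : z) :
    block (Equiv.refl _) (ptrace (regroup e f) M) c c' = ptrace f (block e M c c') := by
  ext b b'
  simp only [block, submatrix_apply, ptrace_apply]
  rfl

lemma ptrace_refl_ptrace_regroup [Fintype x] [Fintype z] (e : n ≃ m × z) (f : m ≃ y × x)
    (M : Matrix n n ℂ) :
    ptrace (Equiv.refl _) (ptrace (regroup e f) M) = ptrace f (ptrace e M) := by
  rw [ptrace_eq_sum_block, ptrace_eq_sum_block e, map_sum]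
  exact Finset.sum_congr rfl fun c _ => block_refl_ptrace_regroup e f M c c

end Blocks

section Ampliation

variable {n m x y z : Type*} [Fintype n] [DecidableEq n] [Fintype m] [DecidableEq m]
  [Fintype x] [Fintype y] [DecidableEq y] [Fintype z] [DecidableEq z]

/-- The ampliation `M ↦ M ⊗ 1` of matrices on `m` to matrices on `n ≃ m × z`. -/
def ampl (e : n ≃ m × z) : Matrix m m ℂ →⋆ₐ[ℂ] Matrix n n ℂ where
  toFun M := (M ⊗ₖ (1 : Matrix z z ℂ)).submatrix e e
  map_one' := by rw [one_kronecker_one, submatrix_one_equiv]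
  map_mul' M N := by rw [submatrix_mul_equiv, ← mul_kronecker_mul, Matrix.one_mul]
  map_zero' := by rw [zero_kronecker, submatrix_zero, Pi.zero_apply, Pi.zero_apply]
  map_add' M N := by rw [add_kronecker, submatrix_add, Pi.add_apply, Pi.add_apply]
  commutes' r := by
    rw [Algebra.algebraMap_eq_smul_one, Algebra.algebraMap_eq_smul_one, smul_kronecker,
      one_kronecker_one, submatrix_smul, Pi.smul_apply, Pi.smul_apply, submatrix_one_equiv]
  map_star' M := by
    rw [star_eq_conjTranspose, star_eq_conjTranspose, conjTranspose_submatrix,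
      conjTranspose_kronecker, conjTranspose_one]

lemma ampl_apply (e : n ≃ m × z) (M : Matrix m m ℂ) (i j : n) :
    ampl e M i j = if (e i).2 = (e j).2 then M (e i).1 (e j).1 else 0 := by
  simp [ampl, one_apply]

lemma ampl_conjTranspose (e : n ≃ m × z) (M : Matrix m m ℂ) : (ampl e M)ᴴ = ampl e Mᴴ :=
  (map_star (ampl e) M).symm

lemma ampl_posSemidef (e : n ≃ m × z) {M : Matrix m m ℂ} (hM : M.PosSemidef) :
    (ampl e M).PosSemidef :=
  (hM.kronecker PosSemidef.one).submatrix e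

lemma ampl_supportProj (e : n ≃ m × z) {M : Matrix m m ℂ} (hM : M.IsHermitian) :
    ampl e (supportProj M) = supportProj (ampl e M) :=
  starAlgHom_map_cfc (ampl e) _ hM

lemma block_ampl (e : n ≃ m × z) (M : Matrix m m ℂ) (c c' : z) :
    block e (ampl e M) c c' = if c = c' then M else 0 := by
  ext a a'
  simp only [block, submatrix_apply, ampl_apply, Equiv.apply_symm_apply]
  split_ifs <;> rfl

lemma block_ampl_mul (e : n ≃ m × z) (M : Matrix m m ℂ) (N : Matrix n n ℂ) (c c' : z) :
    block e (ampl e M * N) c c' = M * block e N c c' := by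
  ext a a'
  simp only [block, submatrix_apply, Matrix.mul_apply, ampl_apply, Equiv.apply_symm_apply]
  rw [← e.symm.sum_comp, Fintype.sum_prod_type]
  simp

lemma block_mul_ampl (e : n ≃ m × z) (M : Matrix m m ℂ) (N : Matrix n n ℂ) (c c' : z) :
    block e (N * ampl e M) c c' = block e N c c' * M := by
  have h := congrArg conjTranspose (block_ampl_mul e Mᴴ Nᴴ c' c)
  simpa only [conjTranspose_mul, conjTranspose_block, ampl_conjTranspose,
    conjTranspose_conjTranspose] using h

lemma ptrace_ampl_mul (e : n ≃ m × z) (M : Matrix m m ℂ) (N : Matrix n n ℂ) :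
    ptrace e (ampl e M * N) = M * ptrace e N := by
  simp only [ptrace_eq_sum_block, block_ampl_mul, Finset.mul_sum]

lemma ptrace_mul_ampl (e : n ≃ m × z) (M : Matrix m m ℂ) (N : Matrix n n ℂ) :
    ptrace e (N * ampl e M) = ptrace e N * M := by
  simp only [ptrace_eq_sum_block, block_mul_ampl, Finset.sum_mul]

lemma trace_mul_ampl (e : n ≃ m × z) (M : Matrix m m ℂ) (N : Matrix n n ℂ) :
    (N * ampl e M).trace = (ptrace e N * M).trace := by
  rw [← trace_ptrace e, ptrace_mul_ampl]

lemma ampl_mul_eq_zero (e : n ≃ m × z) {M : Matrix n n ℂ} (hM : M.PosSemidef)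
    {T : Matrix m m ℂ} (h : T * ptrace e M = 0) : ampl e T * M = 0 := by
  refine mul_eq_zero_of_re_trace_conj hM ?_
  rw [ampl_conjTranspose, trace_mul_ampl, ptrace_ampl_mul, h, Matrix.zero_mul, trace_zero,
    Complex.zero_re]

lemma ampl_supportProj_ptrace_mul (e : n ≃ m × z) {M : Matrix n n ℂ} (hM : M.PosSemidef) :
    ampl e (supportProj (ptrace e M)) * M = M := by
  have h : (1 - supportProj (ptrace e M)) * ptrace e M = 0 := by
    rw [Matrix.sub_mul, Matrix.one_mul, supportProj_mul_self (ptrace_posSemidef e hM).1, sub_self]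
  have h' := ampl_mul_eq_zero e hM h
  rw [map_sub, map_one, Matrix.sub_mul, Matrix.one_mul, sub_eq_zero] at h'
  exact h'.symm

lemma ptrace_regroup_ampl (e : n ≃ m × z) (f : m ≃ y × x) (M : Matrix m m ℂ) :
    ptrace (regroup e f) (ampl e M) = ampl (Equiv.refl _) (ptrace f M) := by
  refine ext_block (Equiv.refl _) fun c c' => ?_
  rw [block_refl_ptrace_regroup, block_ampl, block_ampl, apply_ite (ptrace f), map_zero]

variable [DecidableEq x]

lemma block_ampl_regroup (e : n ≃ m × z) (f : m ≃ y × x) (K : Matrix (y × z) (y × z) ℂ)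
    (c c' : z) :
    block e (ampl (regroup e f) K) c c' = ampl f (block (Equiv.refl _) K c c') := by
  ext a a'
  simp [block, ampl_apply, regroup]

lemma ptrace_ampl_regroup (e : n ≃ m × z) (f : m ≃ y × x) (K : Matrix (y × z) (y × z) ℂ) :
    ptrace e (ampl (regroup e f) K) = ampl f (ptrace (Equiv.refl _) K) := by
  simp only [ptrace_eq_sum_block, block_ampl_regroup, map_sum]

lemma commute_ampl_ampl_prodComm (f : m ≃ y × x) (M : Matrix y y ℂ) (N : Matrix x x ℂ) :
    Commute (ampl f M) (ampl (f.trans (Equiv.prodComm y x)) N) := by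
  have hN : ampl (f.trans (Equiv.prodComm y x)) N =
      ((1 : Matrix y y ℂ) ⊗ₖ N).submatrix f f := by
    ext i j
    rw [ampl_apply, submatrix_apply, kroneckerMap_apply, one_apply, ite_mul, one_mul, zero_mul]
    rfl
  have hM : ampl f M = (M ⊗ₖ (1 : Matrix x x ℂ)).submatrix f f := rfl
  rw [hM, hN, Commute, SemiconjBy, submatrix_mul_equiv, submatrix_mul_equiv, ← mul_kronecker_mul,
    ← mul_kronecker_mul, Matrix.one_mul, Matrix.mul_one, Matrix.one_mul, Matrix.mul_one]

end Ampliation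

/-! ### Relative entropy and the data-processing inequality -/

section DoubleOperator

lemma tendsto_re_trace {n ι : Type*} [Fintype n] {l : Filter ι} {M : ι → Matrix n n ℂ}
    {N : Matrix n n ℂ} (h : Tendsto M l (𝓝 N)) :
    Tendsto (fun s => (M s).trace.re) l (𝓝 N.trace.re) :=
  have hcont : Continuous fun M : Matrix n n ℂ => M.trace.re :=
    Complex.continuous_re.comp continuous_id.matrix_trace
  (hcont.tendsto N).comp h

variable {n : Type*} [Fintype n] [DecidableEq n] {σ ρ : Matrix n n ℂ}

/-- The double operator function `h(σ, ρ)`: in eigenbases of `σ` (on the left) and `ρ` (on the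
right) it multiplies the overlap of the eigenvectors of eigenvalues `x`, `y` by `h x y`. It extends
`f(σ) g(ρ)`, the case `h x y = f x * g y`, linearly to all `h`. -/
noncomputable def biCfc (h : ℝ → ℝ → ℝ) (hσ : σ.IsHermitian) (hρ : ρ.IsHermitian) :
    Matrix n n ℂ :=
  (hσ.eigenvectorUnitary : Matrix n n ℂ) *
    of (fun j i => (h (hσ.eigenvalues j) (hρ.eigenvalues i) : ℂ) *
      ((hσ.eigenvectorUnitary : Matrix n n ℂ)ᴴ * (hρ.eigenvectorUnitary : Matrix n n ℂ)) j i) *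
    (hρ.eigenvectorUnitary : Matrix n n ℂ)ᴴ

lemma eigenvectorUnitary_conjTranspose_mul (hσ : σ.IsHermitian) :
    (hσ.eigenvectorUnitary : Matrix n n ℂ)ᴴ * (hσ.eigenvectorUnitary : Matrix n n ℂ) = 1 :=
  Unitary.coe_star_mul_self hσ.eigenvectorUnitary

lemma eigenvectorUnitary_mul_conjTranspose (hσ : σ.IsHermitian) :
    (hσ.eigenvectorUnitary : Matrix n n ℂ) * (hσ.eigenvectorUnitary : Matrix n n ℂ)ᴴ = 1 :=
  Unitary.coe_mul_star_self hσ.eigenvectorUnitary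

lemma biCfc_congr {h k : ℝ → ℝ → ℝ} (hσ : σ.PosSemidef) (hρ : ρ.PosSemidef)
    (hk : ∀ x y, 0 ≤ x → 0 ≤ y → h x y = k x y) : biCfc h hσ.1 hρ.1 = biCfc k hσ.1 hρ.1 := by
  unfold biCfc
  congr! 7 with j i
  exact hk _ _ (hσ.eigenvalues_nonneg j) (hρ.eigenvalues_nonneg i)

lemma biCfc_add (h k : ℝ → ℝ → ℝ) (hσ : σ.IsHermitian) (hρ : ρ.IsHermitian) :
    biCfc (fun x y => h x y + k x y) hσ hρ = biCfc h hσ hρ + biCfc k hσ hρ := by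
  rw [biCfc, biCfc, biCfc, ← Matrix.add_mul, ← Matrix.mul_add]
  congr 2
  ext j i
  simp [add_mul]

lemma biCfc_const_mul (s : ℝ) (h : ℝ → ℝ → ℝ) (hσ : σ.IsHermitian) (hρ : ρ.IsHermitian) :
    biCfc (fun x y => s * h x y) hσ hρ = (s : ℂ) • biCfc h hσ hρ := by
  rw [biCfc, biCfc, ← Matrix.smul_mul, ← Matrix.mul_smul]
  congr 2
  ext j i
  simp [mul_assoc]

lemma cfc_mul_biCfc (f : ℝ → ℝ) (h : ℝ → ℝ → ℝ) (hσ : σ.IsHermitian) (hρ : ρ.IsHermitian) :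
    cfc f σ * biCfc h hσ hρ = biCfc (fun x y => f x * h x y) hσ hρ := by
  rw [cfc_eq_conj_diagonal f hσ, biCfc, biCfc]
  simp only [Matrix.mul_assoc]
  rw [← Matrix.mul_assoc _ (hσ.eigenvectorUnitary : Matrix n n ℂ) (of _ * _),
    eigenvectorUnitary_conjTranspose_mul, Matrix.one_mul, ← Matrix.mul_assoc (diagonal _)]
  congr 2
  ext j i
  simp [diagonal_mul, mul_assoc]

lemma biCfc_mul_cfc (h : ℝ → ℝ → ℝ) (g : ℝ → ℝ) (hσ : σ.IsHermitian) (hρ : ρ.IsHermitian) :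
    biCfc h hσ hρ * cfc g ρ = biCfc (fun x y => h x y * g y) hσ hρ := by
  rw [cfc_eq_conj_diagonal g hρ, biCfc, biCfc]
  simp only [Matrix.mul_assoc]
  rw [← Matrix.mul_assoc _ (hρ.eigenvectorUnitary : Matrix n n ℂ) (diagonal _ * _),
    eigenvectorUnitary_conjTranspose_mul, Matrix.one_mul, ← Matrix.mul_assoc (of _)]
  congr 2
  ext j i
  simp only [mul_diagonal, of_apply, Complex.ofReal_mul]
  ring

lemma biCfc_one (hσ : σ.IsHermitian) (hρ : ρ.IsHermitian) :
    biCfc (fun _ _ => 1) hσ hρ = 1 := by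
  simp only [biCfc, Complex.ofReal_one, one_mul]
  rw [show ∀ M : Matrix n n ℂ, of (fun j i => M j i) = M from fun _ => rfl, ← Matrix.mul_assoc,
    eigenvectorUnitary_mul_conjTranspose, Matrix.one_mul,
    eigenvectorUnitary_mul_conjTranspose]

lemma cfc_mul_cfc_eq_biCfc (f g : ℝ → ℝ) (hσ : σ.IsHermitian) (hρ : ρ.IsHermitian) :
    cfc f σ * cfc g ρ = biCfc (fun x y => f x * g y) hσ hρ := by
  have h := biCfc_mul_cfc (fun x _ => f x * 1) g hσ hρ
  rw [← cfc_mul_biCfc f (fun _ _ => 1), biCfc_one, Matrix.mul_one] at h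
  simpa only [mul_one] using h

lemma re_trace_biCfc (h : ℝ → ℝ → ℝ) (hσ : σ.IsHermitian) (hρ : ρ.IsHermitian) :
    (biCfc h hσ hρ).trace.re = ∑ j, ∑ i, h (hσ.eigenvalues j) (hρ.eigenvalues i) *
      Complex.normSq (((hσ.eigenvectorUnitary : Matrix n n ℂ)ᴴ *
        (hρ.eigenvectorUnitary : Matrix n n ℂ)) j i) := by
  have hW : (hρ.eigenvectorUnitary : Matrix n n ℂ)ᴴ * (hσ.eigenvectorUnitary : Matrix n n ℂ) =
      ((hσ.eigenvectorUnitary : Matrix n n ℂ)ᴴ * (hρ.eigenvectorUnitary : Matrix n n ℂ))ᴴ := by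
    rw [conjTranspose_mul, conjTranspose_conjTranspose]
  rw [biCfc, Matrix.trace_mul_cycle, hW, Matrix.trace_mul_comm, trace]
  simp only [diag_apply, Matrix.mul_apply, of_apply, conjTranspose_apply, Complex.re_sum]
  congr! 2 with j _ i
  rw [mul_assoc, ← starRingEnd_apply, Complex.mul_conj, Complex.re_ofReal_mul, Complex.ofReal_re]

lemma tendsto_biCfc {l : Filter ℝ} {h : ℝ → ℝ → ℝ → ℝ} {k : ℝ → ℝ → ℝ} (hσ : σ.PosSemidef)
    (hρ : ρ.PosSemidef) (hk : ∀ x y, 0 ≤ x → 0 ≤ y → Tendsto (fun s => h s x y) l (𝓝 (k x y))) :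
    Tendsto (fun s => biCfc (h s) hσ.1 hρ.1) l (𝓝 (biCfc k hσ.1 hρ.1)) := by
  refine Tendsto.mul (Tendsto.mul tendsto_const_nhds ?_) tendsto_const_nhds
  refine tendsto_pi_nhds.mpr fun j => tendsto_pi_nhds.mpr fun i => ?_
  exact ((Complex.continuous_ofReal.tendsto _).comp
    (hk _ _ (hσ.eigenvalues_nonneg j) (hρ.eigenvalues_nonneg i))).mul_const _

lemma hasDerivAt_re_trace_biCfc {h : ℝ → ℝ → ℝ → ℝ} {k : ℝ → ℝ → ℝ} {s : ℝ} (hσ : σ.PosSemidef)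
    (hρ : ρ.PosSemidef) (hk : ∀ x y, 0 ≤ x → 0 ≤ y → HasDerivAt (fun s => h s x y) (k x y) s) :
    HasDerivAt (fun s => (biCfc (h s) hσ.1 hρ.1).trace.re) (biCfc k hσ.1 hρ.1).trace.re s := by
  simp only [re_trace_biCfc]
  exact HasDerivAt.fun_sum fun j _ => HasDerivAt.fun_sum fun i _ =>
    (hk _ _ (hσ.eigenvalues_nonneg j) (hρ.eigenvalues_nonneg i)).mul_const _

end DoubleOperator

section Sylvester

variable {n : Type*} [Fintype n] [DecidableEq n] {σ ρ : Matrix n n ℂ}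

/-- The solution `h(σ, ρ)`, with `h x y = y / (x + s y)`, of the Sylvester equation
`σ X + s X ρ = ρ`; the kernel of `σ` is cut off by hand. -/
noncomputable def sylvesterSol (hσ : σ.IsHermitian) (hρ : ρ.IsHermitian) (s : ℝ) : Matrix n n ℂ :=
  biCfc (fun x y => if x = 0 then 0 else y / (x + s * y)) hσ hρ

lemma sylvesterSol_spec (hσ : σ.PosSemidef) (hρ : ρ.PosSemidef) (hsupp : supportProj σ * ρ = ρ)
    {s : ℝ} (hs : 0 < s) :
    σ * sylvesterSol hσ.1 hρ.1 s + (s : ℂ) • (sylvesterSol hσ.1 hρ.1 s * ρ) = ρ := by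
  have hleft := cfc_mul_biCfc (fun x => x) (fun x y => if x = 0 then 0 else y / (x + s * y))
    hσ.1 hρ.1
  have hright := biCfc_mul_cfc (fun x y => if x = 0 then 0 else y / (x + s * y)) (fun y => y)
    hσ.1 hρ.1
  have hsep := cfc_mul_cfc_eq_biCfc (fun x => if x = 0 then 0 else 1) (fun y => y) hσ.1 hρ.1
  rw [cfc_id' ℝ σ hσ.1.isSelfAdjoint] at hleft
  rw [cfc_id' ℝ ρ hρ.1.isSelfAdjoint] at hright hsep
  rw [sylvesterSol, hleft, hright, ← biCfc_const_mul, ← biCfc_add]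
  refine Eq.trans (biCfc_congr hσ hρ fun x y hx hy => ?_) (hsep.symm.trans hsupp)
  split_ifs with h0
  · simp
  · have : 0 < x + s * y :=
      add_pos_of_pos_of_nonneg (hx.lt_of_ne' h0) (mul_nonneg hs.le hy)
    field_simp

lemma tendsto_add_mul_nhdsGT_zero (x y : ℝ) :
    Tendsto (fun s : ℝ => x + s * y) (𝓝[>] 0) (𝓝 x) := by
  have h : Tendsto (fun s : ℝ => x + s * y) (𝓝 0) (𝓝 (x + 0 * y)) :=
    Continuous.tendsto (by fun_prop) 0
  rw [zero_mul, add_zero] at h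
  exact h.mono_left nhdsWithin_le_nhds

lemma tendsto_inv_mul_add_mul_atTop (x y : ℝ) :
    Tendsto (fun s : ℝ => s⁻¹ * (x + s * y)) atTop (𝓝 y) := by
  have h : Tendsto (fun s : ℝ => s⁻¹ * x + y) atTop (𝓝 (0 * x + y)) :=
    (tendsto_inv_atTop_zero.mul_const x).add_const y
  rw [zero_mul, zero_add] at h
  refine h.congr' ?_
  filter_upwards [eventually_ne_atTop 0] with s hs
  field_simp

lemma sylvesterSol_tendsto_nhdsGT_zero (hσ : σ.PosSemidef) (hρ : ρ.PosSemidef) :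
    Tendsto (sylvesterSol hσ.1 hρ.1) (𝓝[>] 0) (𝓝 (pinv σ * ρ)) := by
  have hsep := cfc_mul_cfc_eq_biCfc (fun x => x⁻¹) (fun y => y) hσ.1 hρ.1
  rw [cfc_id' ℝ ρ hρ.1.isSelfAdjoint] at hsep
  rw [pinv, hsep]
  refine tendsto_biCfc hσ hρ fun x y _ _ => ?_
  split_ifs with h0
  · simp [h0]
  · rw [mul_comm]
    exact (tendsto_add_mul_nhdsGT_zero x y).inv₀ h0 |>.const_mul y

lemma smul_sylvesterSol_tendsto_atTop (hσ : σ.PosSemidef) (hρ : ρ.PosSemidef) :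
    Tendsto (fun s : ℝ => (s : ℂ) • sylvesterSol hσ.1 hρ.1 s) atTop
      (𝓝 (supportProj σ * supportProj ρ)) := by
  simp only [sylvesterSol, ← biCfc_const_mul]
  rw [supportProj, supportProj, cfc_mul_cfc_eq_biCfc _ _ hσ.1 hρ.1]
  refine tendsto_biCfc hσ hρ fun x y _ _ => ?_
  split_ifs with hx hy hy
  · simp
  · simp
  · simp [hy]
  · have h := ((tendsto_inv_mul_add_mul_atTop x y).inv₀ hy).const_mul y
    rw [mul_inv_cancel₀ hy] at h
    simpa only [mul_inv, inv_inv, mul_one, div_eq_mul_inv, mul_left_comm] using h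

/-- The trace of `h(σ, ρ)` with `h x y = y log (x + s y)`. It interpolates between `tr ρ log σ` at
`s = 0` and `tr ρ log ρ` as `s → ∞` (up to a multiple of `log s`); the kernel of `σ` is cut off by
hand. -/
noncomputable def logInterp (hσ : σ.IsHermitian) (hρ : ρ.IsHermitian) (s : ℝ) : ℝ :=
  (biCfc (fun x y => if x = 0 then 0 else y * Real.log (x + s * y)) hσ hρ).trace.re

lemma logInterp_hasDerivAt (hσ : σ.PosSemidef) (hρ : ρ.PosSemidef) {s : ℝ} (hs : 0 < s) :
    HasDerivAt (logInterp hσ.1 hρ.1) (sylvesterSol hσ.1 hρ.1 s * ρ).trace.re s := by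
  have h := biCfc_mul_cfc (fun x y => if x = 0 then 0 else y / (x + s * y)) (fun y => y) hσ.1 hρ.1
  rw [cfc_id' ℝ ρ hρ.1.isSelfAdjoint] at h
  rw [sylvesterSol, h]
  refine hasDerivAt_re_trace_biCfc hσ hρ fun x y hx hy => ?_
  split_ifs with h0
  · simpa using hasDerivAt_const s (0 : ℝ)
  · have hpos : 0 < x + s * y :=
      add_pos_of_pos_of_nonneg (hx.lt_of_ne' h0) (mul_nonneg hs.le hy)
    have hlin : HasDerivAt (fun s => x + s * y) y s := by
      simpa using ((hasDerivAt_id s).mul_const y).const_add x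
    exact ((hlin.log hpos.ne').const_mul y).congr_deriv (mul_comm _ _)

lemma logInterp_tendsto_nhdsGT_zero (hσ : σ.PosSemidef) (hρ : ρ.PosSemidef) :
    Tendsto (logInterp hσ.1 hρ.1) (𝓝[>] 0) (𝓝 (ρ * cfc Real.log σ).trace.re) := by
  have hsep := cfc_mul_cfc_eq_biCfc Real.log (fun y => y) hσ.1 hρ.1
  rw [cfc_id' ℝ ρ hρ.1.isSelfAdjoint] at hsep
  rw [Matrix.trace_mul_comm, hsep]
  refine tendsto_re_trace (tendsto_biCfc hσ hρ fun x y _ _ => ?_)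
  split_ifs with h0
  · simp [h0]
  · rw [mul_comm]
    exact ((tendsto_add_mul_nhdsGT_zero x y).log h0).const_mul y

lemma logInterp_tendsto_atTop (hσ : σ.PosSemidef) (hρ : ρ.PosSemidef)
    (hsupp : supportProj σ * ρ = ρ) :
    Tendsto (fun s => logInterp hσ.1 hρ.1 s - Real.log s * ρ.trace.re) atTop
      (𝓝 (ρ * cfc Real.log ρ).trace.re) := by
  have hlog : ρ * cfc Real.log ρ = cfc (fun y => y * Real.log y) ρ := by
    rw [← cfc_mul_cfc (fun y => y) Real.log ρ, cfc_id' ℝ ρ hρ.1.isSelfAdjoint]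
  have hsep := cfc_mul_cfc_eq_biCfc (fun x => if x = 0 then 0 else 1) (fun y => y) hσ.1 hρ.1
  rw [cfc_id' ℝ ρ hρ.1.isSelfAdjoint, ← supportProj, hsupp] at hsep
  have hdiff : ∀ s, logInterp hσ.1 hρ.1 s - Real.log s * ρ.trace.re =
      (biCfc (fun x y => (if x = 0 then 0 else y * Real.log (x + s * y)) +
        -Real.log s * ((if x = 0 then 0 else 1) * y)) hσ.1 hρ.1).trace.re := fun s => by
    rw [biCfc_add, biCfc_const_mul, ← hsep, trace_add, trace_smul, Complex.add_re, smul_eq_mul,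
      Complex.re_ofReal_mul, neg_mul, ← sub_eq_add_neg, logInterp]
  have hlim : ρ * cfc Real.log ρ =
      biCfc (fun x y => (if x = 0 then 0 else 1) * (y * Real.log y)) hσ.1 hρ.1 := by
    rw [← cfc_mul_cfc_eq_biCfc, ← hlog, ← supportProj, ← Matrix.mul_assoc, hsupp]
  simp only [hdiff, hlim]
  refine tendsto_re_trace (tendsto_biCfc hσ hρ fun x y hx hy => ?_)
  split_ifs with h0
  · simp
  rcases hy.eq_or_lt with rfl | hy
  · simp
  rw [one_mul (y * _)]
  refine (((tendsto_inv_mul_add_mul_atTop x y).log hy.ne').const_mul y).congr' ?_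
  filter_upwards [eventually_gt_atTop 0] with s hs
  have hpos : 0 < x + s * y := add_pos_of_nonneg_of_pos hx (mul_pos hs hy)
  rw [Real.log_mul (inv_ne_zero hs.ne') hpos.ne', Real.log_inv]
  ring

end Sylvester

section DataProcessing

lemma le_of_hasDerivAt_nonneg_of_tendsto {H H' : ℝ → ℝ} {a b : ℝ}
    (hderiv : ∀ s, 0 < s → HasDerivAt H (H' s) s) (hnonneg : ∀ s, 0 < s → 0 ≤ H' s)
    (hzero : Tendsto H (𝓝[>] 0) (𝓝 a)) (htop : Tendsto H atTop (𝓝 b)) :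
    a ≤ b ∧ (a = b → ∀ s, 0 < s → H' s = 0) := by
  have hmono : MonotoneOn H (Set.Ioi 0) := by
    refine monotoneOn_of_hasDerivWithinAt_nonneg (f' := H') (convex_Ioi 0)
      (fun s hs => (hderiv s hs).continuousAt.continuousWithinAt) ?_ ?_
    · exact fun s hs => (hderiv s (interior_subset hs)).hasDerivWithinAt
    · exact fun s hs => hnonneg s (interior_subset hs)
  have hlow : ∀ s, 0 < s → a ≤ H s := fun s hs => by
    refine le_of_tendsto hzero ?_
    filter_upwards [Ioo_mem_nhdsGT hs] with t ht
    exact hmono ht.1 hs ht.2.le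
  have hup : ∀ s, 0 < s → H s ≤ b := fun s hs => by
    refine ge_of_tendsto htop ?_
    filter_upwards [eventually_ge_atTop s] with t ht
    exact hmono hs (hs.trans_le ht) ht
  refine ⟨(hlow 1 one_pos).trans (hup 1 one_pos), fun hab s hs => ?_⟩
  have hconst : H =ᶠ[𝓝 s] fun _ => a := by
    filter_upwards [Ioi_mem_nhds hs] with t ht
    exact le_antisymm ((hup t ht).trans hab.ge) (hlow t ht)
  exact (hderiv s hs).unique ((hasDerivAt_const s a).congr_of_eventuallyEq hconst)

variable {n m z : Type*} [Fintype n]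

/-- The concave quadratic functional whose maximisers are the solutions of the Sylvester equation
`σ X + s X ρ = ρ`. -/
noncomputable def sylvesterForm (ρ σ : Matrix n n ℂ) (s : ℝ) (X : Matrix n n ℂ) : ℝ :=
  2 * (X * ρ).trace.re - (Xᴴ * σ * X).trace.re - s * (X * ρ * Xᴴ).trace.re

lemma re_trace_mul_comm_of_isHermitian {M : Matrix n n ℂ} (hM : M.IsHermitian) (X : Matrix n n ℂ) :
    (Xᴴ * M).trace.re = (X * M).trace.re := by
  rw [← Complex.conj_re, starRingEnd_apply, ← trace_conjTranspose, conjTranspose_mul,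
    conjTranspose_conjTranspose, hM.eq, Matrix.trace_mul_comm]

lemma sylvesterForm_eq {ρ σ : Matrix n n ℂ} (hρ : ρ.IsHermitian) (hσ : σ.IsHermitian) {s : ℝ}
    {X₀ : Matrix n n ℂ} (hX₀ : σ * X₀ + (s : ℂ) • (X₀ * ρ) = ρ) (X : Matrix n n ℂ) :
    sylvesterForm ρ σ s X = (X₀ * ρ).trace.re - ((X - X₀)ᴴ * σ * (X - X₀)).trace.re -
      s * ((X - X₀) * ρ * (X - X₀)ᴴ).trace.re := by
  have hcross : ∀ Y : Matrix n n ℂ,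
      (Yᴴ * σ * X₀).trace.re + s * (X₀ * ρ * Yᴴ).trace.re = (Y * ρ).trace.re := fun Y => by
    rw [← re_trace_mul_comm_of_isHermitian hρ Y]
    conv_rhs => rw [← hX₀]
    rw [Matrix.mul_add, Matrix.mul_smul, trace_add, trace_smul, Complex.add_re, smul_eq_mul,
      Complex.re_ofReal_mul, Matrix.mul_assoc, Matrix.trace_mul_comm Yᴴ (X₀ * ρ)]
  have hleft : (X₀ᴴ * σ * X).trace.re = (Xᴴ * σ * X₀).trace.re := by
    have h := re_trace_mul_comm_of_isHermitian hσ (X₀ * Xᴴ)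
    rw [conjTranspose_mul, conjTranspose_conjTranspose] at h
    rw [Matrix.trace_mul_cycle, h, ← Matrix.trace_mul_cycle]
  have hright : (X * ρ * X₀ᴴ).trace.re = (X₀ * ρ * Xᴴ).trace.re := by
    have h := re_trace_mul_comm_of_isHermitian hρ (Xᴴ * X₀)
    rw [conjTranspose_mul, conjTranspose_conjTranspose] at h
    rw [Matrix.trace_mul_cycle, h, ← Matrix.trace_mul_cycle]
  have hX := hcross X
  have hX₀' := hcross X₀
  simp only [sylvesterForm, conjTranspose_sub, Matrix.sub_mul, Matrix.mul_sub, trace_sub,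
    Complex.sub_re]
  linear_combination hX₀' - 2 * hX - hleft - s * hright

variable [DecidableEq n] [Fintype m] [DecidableEq m] [Fintype z]

lemma supportProj_ptrace_mul_ptrace (e : n ≃ m × z) {ρ σ : Matrix n n ℂ} (hσ : σ.PosSemidef)
    (hsupp : supportProj σ * ρ = ρ) :
    supportProj (ptrace e σ) * ptrace e ρ = ptrace e ρ := by
  classical
  have hσsupp : ampl e (supportProj (ptrace e σ)) * supportProj σ = supportProj σ := by
    rw [← self_mul_pinv hσ.1, ← Matrix.mul_assoc, ampl_supportProj_ptrace_mul e hσ]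
  rw [← ptrace_ampl_mul, ← hsupp, ← Matrix.mul_assoc, hσsupp]

variable [DecidableEq z]

lemma sylvesterForm_ampl (e : n ≃ m × z) (ρ σ : Matrix n n ℂ) (s : ℝ) (Y : Matrix m m ℂ) :
    sylvesterForm ρ σ s (ampl e Y) = sylvesterForm (ptrace e ρ) (ptrace e σ) s Y := by
  simp only [sylvesterForm, ampl_conjTranspose, trace_mul_ampl, ptrace_ampl_mul,
    Matrix.trace_mul_comm (ampl e Y) ρ, Matrix.trace_mul_comm (ptrace e ρ) Y]

variable {ρ σ : Matrix n n ℂ}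

lemma re_trace_sylvesterSol_ptrace_le (e : n ≃ m × z) (hρ : ρ.PosSemidef) (hσ : σ.PosSemidef)
    (hsupp : supportProj σ * ρ = ρ) {s : ℝ} (hs : 0 < s) {Y : Matrix m m ℂ}
    (hY : ptrace e σ * Y + (s : ℂ) • (Y * ptrace e ρ) = ptrace e ρ) :
    (Y * ptrace e ρ).trace.re ≤ (sylvesterSol hσ.1 hρ.1 s * ρ).trace.re ∧
      ((Y * ptrace e ρ).trace.re = (sylvesterSol hσ.1 hρ.1 s * ρ).trace.re →
        σ * ampl e Y + (s : ℂ) • (ampl e Y * ρ) = ρ) := by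
  have hX := sylvesterSol_spec hσ hρ hsupp hs
  set X := sylvesterSol hσ.1 hρ.1 s
  have hfull := sylvesterForm_eq hρ.1 hσ.1 hX (ampl e Y)
  have hred := sylvesterForm_eq (ptrace_posSemidef e hρ).1 (ptrace_posSemidef e hσ).1 hY Y
  rw [sub_self, Matrix.mul_zero, Matrix.zero_mul, Matrix.zero_mul, trace_zero, Complex.zero_re,
    mul_zero, sub_zero, sub_zero] at hred
  rw [sylvesterForm_ampl, hred] at hfull
  set D := ampl e Y - X
  have hσD : 0 ≤ (Dᴴ * σ * D).trace.re :=
    (Complex.nonneg_iff.mp (hσ.conjTranspose_mul_mul_same D).trace_nonneg).1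
  have hDρ : 0 ≤ s * (D * ρ * Dᴴ).trace.re := mul_nonneg hs.le
    (Complex.nonneg_iff.mp (hρ.mul_mul_conjTranspose_same D).trace_nonneg).1
  refine ⟨by linarith, fun heq => ?_⟩
  have hσD0 : σ * D = 0 := by
    have h : Dᴴ * σ = 0 := mul_eq_zero_of_re_trace_conj hσ <| by
      rw [conjTranspose_conjTranspose]
      linarith
    simpa only [conjTranspose_mul, conjTranspose_conjTranspose, hσ.1.eq, conjTranspose_zero]
      using congrArg conjTranspose h
  have hDρ0 : D * ρ = 0 := mul_eq_zero_of_re_trace_conj hρ <| by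
    have h : s * (D * ρ * Dᴴ).trace.re = 0 := by linarith
    exact (mul_eq_zero.mp h).resolve_left hs.ne'
  rw [Matrix.mul_sub, sub_eq_zero] at hσD0
  rw [Matrix.sub_mul, sub_eq_zero] at hDρ0
  rw [hσD0, hDρ0, hX]

/-- The quantum relative entropy, in natural units; it has its usual meaning when the support of
`ρ` is contained in that of `σ`. -/
noncomputable def relEntropy (ρ σ : Matrix n n ℂ) : ℝ :=
  (ρ * cfc Real.log ρ).trace.re - (ρ * cfc Real.log σ).trace.re

theorem relEntropy_ptrace_le (e : n ≃ m × z) (hρ : ρ.PosSemidef) (hσ : σ.PosSemidef)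
    (hsupp : supportProj σ * ρ = ρ) :
    relEntropy (ptrace e ρ) (ptrace e σ) ≤ relEntropy ρ σ ∧
      (relEntropy (ptrace e ρ) (ptrace e σ) = relEntropy ρ σ → ∀ s : ℝ, 0 < s →
        σ * ampl e (sylvesterSol (ptrace_posSemidef e hσ).1 (ptrace_posSemidef e hρ).1 s) +
          (s : ℂ) •
            (ampl e (sylvesterSol (ptrace_posSemidef e hσ).1 (ptrace_posSemidef e hρ).1 s) * ρ) =
        ρ) := by
  have hρ' := ptrace_posSemidef e hρ
  have hσ' := ptrace_posSemidef e hσ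
  have hsupp' := supportProj_ptrace_mul_ptrace e hσ hsupp
  have hderiv : ∀ s, 0 < s → HasDerivAt (fun s => logInterp hσ.1 hρ.1 s - logInterp hσ'.1 hρ'.1 s)
      ((sylvesterSol hσ.1 hρ.1 s * ρ).trace.re -
        (sylvesterSol hσ'.1 hρ'.1 s * ptrace e ρ).trace.re) s := fun s hs =>
    (logInterp_hasDerivAt hσ hρ hs).sub (logInterp_hasDerivAt hσ' hρ' hs)
  have hcompare := fun s (hs : 0 < s) =>
    re_trace_sylvesterSol_ptrace_le e hρ hσ hsupp hs (sylvesterSol_spec hσ' hρ' hsupp' hs)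
  have htop : Tendsto (fun s => logInterp hσ.1 hρ.1 s - logInterp hσ'.1 hρ'.1 s) atTop
      (𝓝 ((ρ * cfc Real.log ρ).trace.re - (ptrace e ρ * cfc Real.log (ptrace e ρ)).trace.re)) := by
    refine ((logInterp_tendsto_atTop hσ hρ hsupp).sub
      (logInterp_tendsto_atTop hσ' hρ' hsupp')).congr fun s => ?_
    rw [trace_ptrace]
    ring
  obtain ⟨hle, heq⟩ := le_of_hasDerivAt_nonneg_of_tendsto hderiv
    (fun s hs => sub_nonneg.mpr (hcompare s hs).1)
    ((logInterp_tendsto_nhdsGT_zero hσ hρ).sub (logInterp_tendsto_nhdsGT_zero hσ' hρ')) htop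
  unfold relEntropy
  refine ⟨by linarith, fun h s hs => (hcompare s hs).2 ?_⟩
  exact (sub_eq_zero.mp (heq (by linarith) s hs)).symm

end DataProcessing

section DataProcessingEquality

variable {n m z : Type*} [Fintype n] [DecidableEq n] [Fintype m] [DecidableEq m] [Fintype z]
  [DecidableEq z] {ρ σ : Matrix n n ℂ}

lemma supportProj_mul_supportProj_of_mul {T : Matrix n n ℂ} (hρ : ρ.IsHermitian) (h : T * ρ = ρ) :
    T * supportProj ρ = supportProj ρ := by
  rw [← self_mul_pinv hρ, ← Matrix.mul_assoc, h]

lemma continuous_ampl (e : n ≃ m × z) : Continuous (ampl e) :=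
  LinearMap.continuous_of_finiteDimensional (ampl e).toAlgHom.toLinearMap

/-- The operator through which `ρ` is recovered from `σ` when the partial trace along `e` preserves
their relative entropy. -/
noncomputable def recoveryFactor (e : n ≃ m × z) (ρ σ : Matrix n n ℂ) : Matrix m m ℂ :=
  pinv (ptrace e σ) * ptrace e ρ

lemma mul_ampl_recoveryFactor (e : n ≃ m × z) (hρ : ρ.PosSemidef)
    (hσ : σ.PosSemidef) (hsupp : supportProj σ * ρ = ρ)
    (heq : relEntropy (ptrace e ρ) (ptrace e σ) = relEntropy ρ σ) :
    σ * ampl e (recoveryFactor e ρ σ) = ρ := by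
  have hY := (continuous_ampl e).tendsto _ |>.comp
    (sylvesterSol_tendsto_nhdsGT_zero (ptrace_posSemidef e hσ) (ptrace_posSemidef e hρ))
  have hs : Tendsto (fun s : ℝ => (s : ℂ)) (𝓝[>] 0) (𝓝 0) :=
    (Complex.continuous_ofReal.tendsto' 0 0 Complex.ofReal_zero).mono_left nhdsWithin_le_nhds
  have hlim := (hY.const_mul σ).add (hs.smul (hY.mul_const ρ))
  rw [zero_smul, add_zero] at hlim
  refine tendsto_nhds_unique_of_eventuallyEq hlim tendsto_const_nhds ?_
  filter_upwards [self_mem_nhdsWithin] with s hs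
  exact (relEntropy_ptrace_le e hρ hσ hsupp).2 heq s hs

lemma supportProj_mul_ampl_supportProj (e : n ≃ m × z) (hρ : ρ.PosSemidef)
    (hσ : σ.PosSemidef) (hsupp : supportProj σ * ρ = ρ)
    (heq : relEntropy (ptrace e ρ) (ptrace e σ) = relEntropy ρ σ) :
    supportProj σ * ampl e (supportProj (ptrace e ρ)) = supportProj ρ := by
  have hρ0 : ρ * (1 - supportProj ρ) = 0 := by
    rw [Matrix.mul_sub, Matrix.mul_one, self_mul_supportProj hρ.1, sub_self]
  have hY := (continuous_ampl e).tendsto _ |>.comp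
    (smul_sylvesterSol_tendsto_atTop (ptrace_posSemidef e hσ) (ptrace_posSemidef e hρ))
  rw [supportProj_mul_supportProj_of_mul (ptrace_posSemidef e hρ).1
    (supportProj_ptrace_mul_ptrace e hσ hsupp)] at hY
  have hlim : supportProj σ * ampl e (supportProj (ptrace e ρ)) * (1 - supportProj ρ) = 0 := by
    refine tendsto_nhds_unique_of_eventuallyEq
      ((hY.const_mul (supportProj σ)).mul_const (1 - supportProj ρ)) tendsto_const_nhds ?_
    filter_upwards [eventually_gt_atTop 0] with s hs
    have h := congrArg (· * (1 - supportProj ρ))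
      ((relEntropy_ptrace_le e hρ hσ hsupp).2 heq s hs)
    simp only [Matrix.add_mul, Matrix.smul_mul, Matrix.mul_assoc, hρ0, Matrix.mul_zero, smul_zero,
      add_zero] at h
    rw [Function.comp_apply, map_smul, Matrix.mul_smul, Matrix.smul_mul, Matrix.mul_assoc,
      supportProj_mul_eq_zero hσ.1 h, smul_zero]
  rw [Matrix.mul_sub, Matrix.mul_one, sub_eq_zero, Matrix.mul_assoc,
    supportProj_mul_supportProj_of_mul hρ.1 (ampl_supportProj_ptrace_mul e hρ),
    supportProj_mul_supportProj_of_mul hρ.1 hsupp] at hlim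
  exact hlim

lemma supportProj_mul_ampl_recoveryFactor (e : n ≃ m × z) (hρ : ρ.PosSemidef)
    (hσ : σ.PosSemidef) (hsupp : supportProj σ * ρ = ρ)
    (heq : relEntropy (ptrace e ρ) (ptrace e σ) = relEntropy ρ σ) :
    supportProj σ * ampl e (recoveryFactor e ρ σ) =
      ampl e (recoveryFactor e ρ σ) * supportProj ρ := by
  have hY := (continuous_ampl e).tendsto _ |>.comp
    (sylvesterSol_tendsto_nhdsGT_zero (ptrace_posSemidef e hσ) (ptrace_posSemidef e hρ))
  have hσ0 : (1 - supportProj σ) * σ = 0 := by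
    rw [Matrix.sub_mul, Matrix.one_mul, supportProj_mul_self hσ.1, sub_self]
  have hρ0 : (1 - supportProj σ) * ρ = 0 := by
    rw [Matrix.sub_mul, Matrix.one_mul, hsupp, sub_self]
  have hcut : (1 - supportProj σ) * ampl e (recoveryFactor e ρ σ) * ρ = 0 := by
    refine tendsto_nhds_unique_of_eventuallyEq
      ((hY.const_mul (1 - supportProj σ)).mul_const ρ) tendsto_const_nhds ?_
    filter_upwards [self_mem_nhdsWithin] with s hs
    have h := congrArg ((1 - supportProj σ) * ·)
      ((relEntropy_ptrace_le e hρ hσ hsupp).2 heq s hs)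
    simp only [Matrix.mul_add, Matrix.mul_smul, ← Matrix.mul_assoc, hσ0, hρ0, Matrix.zero_mul,
      zero_add] at h
    exact (smul_eq_zero.mp h).resolve_left (Complex.ofReal_ne_zero.mpr (ne_of_gt hs))
  have hright := mul_supportProj_eq_zero hρ.1 hcut
  have hleft : supportProj σ * ampl e (recoveryFactor e ρ σ) * supportProj ρ =
      supportProj σ * ampl e (recoveryFactor e ρ σ) := by
    rw [← pinv_mul_self hσ.1, Matrix.mul_assoc (pinv σ), mul_ampl_recoveryFactor e hρ hσ hsupp heq,
      Matrix.mul_assoc, self_mul_supportProj hρ.1]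
  rw [Matrix.sub_mul, Matrix.one_mul, Matrix.sub_mul, sub_eq_zero, hleft] at hright
  exact hright.symm

lemma commute_supportProj_ampl_recoveryFactor (e : n ≃ m × z) (hρ : ρ.PosSemidef)
    (hσ : σ.PosSemidef) (hsupp : supportProj σ * ρ = ρ)
    (heq : relEntropy (ptrace e ρ) (ptrace e σ) = relEntropy ρ σ) :
    Commute (supportProj σ) (ampl e (recoveryFactor e ρ σ)) := by
  have hsuppρ : ampl e (supportProj (ptrace e ρ)) * supportProj σ = supportProj ρ := by
    have h := congrArg conjTranspose (supportProj_mul_ampl_supportProj e hρ hσ hsupp heq)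
    rwa [conjTranspose_mul, ampl_conjTranspose, (supportProj_isHermitian (ptrace e ρ)).eq,
      (supportProj_isHermitian σ).eq, (supportProj_isHermitian ρ).eq] at h
  rw [Commute, SemiconjBy, supportProj_mul_ampl_recoveryFactor e hρ hσ hsupp heq, ← hsuppρ,
    ← Matrix.mul_assoc, ← map_mul, recoveryFactor, Matrix.mul_assoc,
    self_mul_supportProj (ptrace_posSemidef e hρ).1]

end DataProcessingEquality

/-! ### Strong subadditivity and quantum Markov chains -/

section MarkovBlock

variable {n m x y z : Type*} [Fintype x] [Fintype y] [DecidableEq y] [Fintype z]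

/-- The `(c, c')` block of `ρ_Y⁻¹ ρ_YZ` with respect to `Z`. -/
noncomputable def markovBlock (e : n ≃ m × z) (f : m ≃ y × x) (ρ : Matrix n n ℂ) (c c' : z) :
    Matrix y y ℂ :=
  pinv (ptrace f (ptrace e ρ)) * ptrace f (block e ρ c c')

lemma supportProj_mul_markovBlock (e : n ≃ m × z) (f : m ≃ y × x) (ρ : Matrix n n ℂ) (c c' : z) :
    supportProj (ptrace f (ptrace e ρ)) * markovBlock e f ρ c c' = markovBlock e f ρ c c' := by
  rw [markovBlock, ← Matrix.mul_assoc, supportProj_mul_pinv]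

lemma markovBlock_mul_supportProj (e : n ≃ m × z) (f : m ≃ y × x)
    {ρ : Matrix n n ℂ} (hρ : ρ.PosSemidef) (c c' : z) :
    markovBlock e f ρ c c' * supportProj (ptrace f (ptrace e ρ)) = markovBlock e f ρ c c' := by
  classical
  have hYZ : ptrace (regroup e f) ρ * ampl (Equiv.refl _) (supportProj (ptrace f (ptrace e ρ))) =
      ptrace (regroup e f) ρ := by
    have h := congrArg conjTranspose
      (ampl_supportProj_ptrace_mul (Equiv.refl _) (ptrace_posSemidef (regroup e f) hρ))
    rwa [conjTranspose_mul, ampl_conjTranspose, (supportProj_isHermitian _).eq,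
      (ptrace_posSemidef _ hρ).1.eq, ptrace_refl_ptrace_regroup] at h
  rw [markovBlock, Matrix.mul_assoc, ← block_refl_ptrace_regroup, ← block_mul_ampl, hYZ]

end MarkovBlock

section StrongSubadditivity

variable {n m x y z : Type*} [Fintype n] [DecidableEq n] [Fintype m] [DecidableEq m]
  [Fintype x] [Fintype y] [DecidableEq y] [Fintype z] [DecidableEq z] {ρ : Matrix n n ℂ}

lemma relEntropy_ampl_ptrace (e : n ≃ m × z) (hρ : ρ.PosSemidef) :
    relEntropy ρ (ampl e (ptrace e ρ)) =
      (vNEntropy (ptrace e ρ) - vNEntropy ρ) * Real.log 2 := by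
  have hρ' := (ptrace_posSemidef e hρ).1
  rw [relEntropy, ← starAlgHom_map_cfc _ _ hρ', trace_mul_ampl, sub_mul,
    vNEntropy_mul_log_two hρ.1, vNEntropy_mul_log_two hρ']
  ring

lemma ptrace_regroup_ampl_ptrace (e : n ≃ m × z) (f : m ≃ y × x) (ρ : Matrix n n ℂ) :
    ptrace (regroup e f) (ampl e (ptrace e ρ)) =
      ampl (Equiv.refl _) (ptrace (Equiv.refl _) (ptrace (regroup e f) ρ)) := by
  rw [ptrace_regroup_ampl, ptrace_refl_ptrace_regroup]

lemma relEntropy_ptrace_regroup (e : n ≃ m × z) (f : m ≃ y × x) (hρ : ρ.PosSemidef) :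
    relEntropy (ptrace (regroup e f) ρ) (ptrace (regroup e f) (ampl e (ptrace e ρ))) =
      (vNEntropy (ptrace f (ptrace e ρ)) - vNEntropy (ptrace (regroup e f) ρ)) * Real.log 2 := by
  rw [ptrace_regroup_ampl_ptrace, relEntropy_ampl_ptrace _ (ptrace_posSemidef _ hρ),
    ptrace_refl_ptrace_regroup]

lemma supportProj_ampl_ptrace_mul (e : n ≃ m × z) (hρ : ρ.PosSemidef) :
    supportProj (ampl e (ptrace e ρ)) * ρ = ρ := by
  rw [← ampl_supportProj e (ptrace_posSemidef e hρ).1, ampl_supportProj_ptrace_mul e hρ]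

theorem strong_subadditivity (e : n ≃ m × z) (f : m ≃ y × x) (hρ : ρ.PosSemidef) :
    vNEntropy ρ + vNEntropy (ptrace f (ptrace e ρ)) ≤
      vNEntropy (ptrace e ρ) + vNEntropy (ptrace (regroup e f) ρ) := by
  classical
  have h := (relEntropy_ptrace_le (regroup e f) hρ (ampl_posSemidef e (ptrace_posSemidef e hρ))
    (supportProj_ampl_ptrace_mul e hρ)).1
  rw [relEntropy_ptrace_regroup e f hρ, relEntropy_ampl_ptrace e hρ] at h
  have := le_of_mul_le_mul_right h (Real.log_pos one_lt_two)
  linarith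

/-- `I(X;Z|Y) = 0`, for a state on `n ≃ m × z` with `m ≃ y × x`. -/
def IsMarkov (e : n ≃ m × z) (f : m ≃ y × x) (ρ : Matrix n n ℂ) : Prop :=
  vNEntropy (ptrace e ρ) + vNEntropy (ptrace (regroup e f) ρ) - vNEntropy ρ -
    vNEntropy (ptrace f (ptrace e ρ)) = 0

/-- `ρ_Y⁻¹ ρ_YZ`, by which `ρ_XY` has to be multiplied to recover a Markov state. -/
noncomputable def markovFactor (e : n ≃ m × z) (f : m ≃ y × x) (ρ : Matrix n n ℂ) :
    Matrix (y × z) (y × z) ℂ :=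
  ampl (Equiv.refl _) (pinv (ptrace f (ptrace e ρ))) * ptrace (regroup e f) ρ

lemma markovFactor_eq_recoveryFactor (e : n ≃ m × z) (f : m ≃ y × x) (hρ : ρ.PosSemidef) :
    markovFactor e f ρ = recoveryFactor (regroup e f) ρ (ampl e (ptrace e ρ)) := by
  have hY := (ptrace_posSemidef f (ptrace_posSemidef e hρ)).1
  rw [recoveryFactor, markovFactor, ptrace_regroup_ampl, pinv, pinv, starAlgHom_map_cfc _ _ hY]

variable {e : n ≃ m × z} {f : m ≃ y × x}

lemma IsMarkov.relEntropy_eq (h : IsMarkov e f ρ) (hρ : ρ.PosSemidef) :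
    relEntropy (ptrace (regroup e f) ρ) (ptrace (regroup e f) (ampl e (ptrace e ρ))) =
      relEntropy ρ (ampl e (ptrace e ρ)) := by
  rw [IsMarkov] at h
  rw [relEntropy_ptrace_regroup e f hρ, relEntropy_ampl_ptrace e hρ]
  congr 1
  linarith

variable [DecidableEq x]

theorem IsMarkov.supportProj_mul_supportProj (h : IsMarkov e f ρ) (hρ : ρ.PosSemidef) :
    ampl e (supportProj (ptrace e ρ)) * ampl (regroup e f) (supportProj (ptrace (regroup e f) ρ)) =
      supportProj ρ := by
  rw [ampl_supportProj e (ptrace_posSemidef e hρ).1]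
  exact supportProj_mul_ampl_supportProj _ hρ (ampl_posSemidef e (ptrace_posSemidef e hρ))
    (supportProj_ampl_ptrace_mul e hρ) (h.relEntropy_eq hρ)

theorem IsMarkov.ampl_mul_markovFactor (h : IsMarkov e f ρ) (hρ : ρ.PosSemidef) :
    ampl e (ptrace e ρ) * ampl (regroup e f) (markovFactor e f ρ) = ρ := by
  rw [markovFactor_eq_recoveryFactor e f hρ]
  exact mul_ampl_recoveryFactor _ hρ (ampl_posSemidef e (ptrace_posSemidef e hρ))
    (supportProj_ampl_ptrace_mul e hρ) (h.relEntropy_eq hρ)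

theorem IsMarkov.commute_supportProj_markovFactor (h : IsMarkov e f ρ) (hρ : ρ.PosSemidef) :
    Commute (ampl e (supportProj (ptrace e ρ))) (ampl (regroup e f) (markovFactor e f ρ)) := by
  rw [markovFactor_eq_recoveryFactor e f hρ, ampl_supportProj e (ptrace_posSemidef e hρ).1]
  exact commute_supportProj_ampl_recoveryFactor _ hρ (ampl_posSemidef e (ptrace_posSemidef e hρ))
    (supportProj_ampl_ptrace_mul e hρ) (h.relEntropy_eq hρ)

lemma block_ampl_markovFactor (e : n ≃ m × z) (f : m ≃ y × x) (ρ : Matrix n n ℂ) (c c' : z) :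
    block e (ampl (regroup e f) (markovFactor e f ρ)) c c' = ampl f (markovBlock e f ρ c c') := by
  rw [block_ampl_regroup, markovFactor, block_ampl_mul, block_refl_ptrace_regroup, markovBlock]

lemma IsMarkov.mul_ampl_markovBlock (h : IsMarkov e f ρ) (hρ : ρ.PosSemidef) (c c' : z) :
    ptrace e ρ * ampl f (markovBlock e f ρ c c') = block e ρ c c' := by
  rw [← block_ampl_markovFactor, ← block_ampl_mul, h.ampl_mul_markovFactor hρ]

lemma IsMarkov.commute_supportProj_markovBlock (h : IsMarkov e f ρ) (hρ : ρ.PosSemidef)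
    (c c' : z) : Commute (supportProj (ptrace e ρ)) (ampl f (markovBlock e f ρ c c')) := by
  rw [Commute, SemiconjBy, ← block_ampl_markovFactor, ← block_ampl_mul, ← block_mul_ampl,
    (h.commute_supportProj_markovFactor hρ).eq]

end StrongSubadditivity

/-! ### States with `I(A;C|B) = I(B;C|A) = 0` -/

section MatchedFamilies

variable {n ι : Type*} [Fintype n] [DecidableEq n] {h : Matrix n n ℂ}
  {X X' : ι → ι → Matrix n n ℂ}

/-- Two families of operators, taken from commuting `*`-algebras and commuting with the support of
the state `h`, that agree after multiplication by `h`. For a state `h` of `AB`, they are an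
operation that can be performed on either side. -/
structure MatchedFamilies (h : Matrix n n ℂ) (X X' : ι → ι → Matrix n n ℂ) : Prop where
  posSemidef : h.PosSemidef
  mul_eq : ∀ c c', h * X c c' = h * X' c c'
  conjTranspose_mul_eq : ∀ c c', (h * X c c')ᴴ = h * X c' c
  commute_supportProj : ∀ c c', Commute (supportProj h) (X c c')
  commute_supportProj' : ∀ c c', Commute (supportProj h) (X' c c')
  commute : ∀ c c' d d', Commute (X' c c') (X d d')
  commute_conjTranspose : ∀ c c' d d', Commute (X' c c') (X d d')ᴴ

namespace MatchedFamilies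

lemma symm (H : MatchedFamilies h X X') : MatchedFamilies h X' X where
  posSemidef := H.posSemidef
  mul_eq c c' := (H.mul_eq c c').symm
  conjTranspose_mul_eq c c' := by rw [← H.mul_eq, ← H.mul_eq, H.conjTranspose_mul_eq]
  commute_supportProj := H.commute_supportProj'
  commute_supportProj' := H.commute_supportProj
  commute c c' d d' := (H.commute d d' c c').symm
  commute_conjTranspose c c' d d' := by
    simpa only [star_eq_conjTranspose, conjTranspose_conjTranspose] using
      (H.commute_conjTranspose d d' c c').star_star.symm

lemma supportProj_mul_eq (H : MatchedFamilies h X X') (c c' : ι) :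
    supportProj h * X c c' = supportProj h * X' c c' := by
  rw [← pinv_mul_self H.posSemidef.1, mul_assoc, mul_assoc, H.mul_eq]

lemma conjTranspose_mul_supportProj_eq (H : MatchedFamilies h X X') (c c' : ι) :
    (X c c')ᴴ * supportProj h = (X' c c')ᴴ * supportProj h := by
  simpa only [conjTranspose_mul, (supportProj_isHermitian h).eq] using
    congrArg conjTranspose (H.supportProj_mul_eq c c')

lemma conjTranspose_mul_state (H : MatchedFamilies h X X') (c c' : ι) :
    (X c' c)ᴴ * h = h * X c c' := by
  rw [← H.conjTranspose_mul_eq c' c, conjTranspose_mul, H.posSemidef.1.eq]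

-- On the support of `h`, the adjoint of `X c c'` may be exchanged for that of `X' c c'`.
lemma normal_mul_supportProj (H : MatchedFamilies h X X') (c c' : ι) :
    X c c' * (X c c')ᴴ * supportProj h = (X c c')ᴴ * X c c' * supportProj h := by
  calc X c c' * (X c c')ᴴ * supportProj h
      = X c c' * (X' c c')ᴴ * supportProj h := by
        rw [mul_assoc, H.conjTranspose_mul_supportProj_eq, mul_assoc]
    _ = (X' c c')ᴴ * supportProj h * X c c' := by
        rw [(H.symm.commute_conjTranspose c c' c c').eq, mul_assoc, mul_assoc,
          (H.commute_supportProj c c').eq]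
    _ = (X c c')ᴴ * X c c' * supportProj h := by
        rw [← H.conjTranspose_mul_supportProj_eq, mul_assoc, mul_assoc,
          (H.commute_supportProj c c').eq]

lemma normal_mul (H : MatchedFamilies h X X') (c c' : ι) :
    X c c' * (X c c')ᴴ * h = (X c c')ᴴ * X c c' * h := by
  rw [← supportProj_mul_self H.posSemidef.1, ← mul_assoc, H.normal_mul_supportProj, mul_assoc]

-- With `x = X c c'` and `z = (X c' c)ᴴ`, all four terms of `tr (z - x) h (z - x)ᴴ` are equal to
-- `± tr h x xᴴ`, because `z h = h x`.
lemma conjTranspose_mul_eq_mul (H : MatchedFamilies h X X') (c c' : ι) :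
    (X c' c)ᴴ * h = X c c' * h := by
  set x := X c c'
  set z := (X c' c)ᴴ with hz
  have zh : z * h = h * x := H.conjTranspose_mul_state c c'
  have hz' : h * zᴴ = xᴴ * h := by
    simpa only [conjTranspose_mul, H.posSemidef.1.eq] using congrArg conjTranspose zh
  have commute_zH : Commute (X' c c') zᴴ := by
    rw [hz, conjTranspose_conjTranspose]
    exact H.commute c c' c' c
  have trace_zz : (z * h * zᴴ).trace = (h * (x * xᴴ)).trace := by
    have : z * h * zᴴ = xᴴ * (h * x) := by
      rw [zh, H.mul_eq, mul_assoc, commute_zH.eq, ← mul_assoc, hz', mul_assoc]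
    rw [this, trace_mul_comm, mul_assoc]
  have trace_zx : (z * h * xᴴ).trace = (h * (x * xᴴ)).trace := by rw [zh, mul_assoc]
  have trace_xz : (x * h * zᴴ).trace = (h * (x * xᴴ)).trace := by
    rw [mul_assoc, hz', ← mul_assoc, trace_mul_comm]
  have trace_xx : (x * h * xᴴ).trace = (h * (x * xᴴ)).trace := by
    rw [trace_mul_comm, ← mul_assoc, ← H.normal_mul, trace_mul_comm]
  have trace_sub_conj : ((z - x) * h * (z - x)ᴴ).trace = 0 := by
    rw [conjTranspose_sub, sub_mul, sub_mul, mul_sub, mul_sub, trace_sub, trace_sub, trace_sub,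
      trace_zz, trace_zx, trace_xz, trace_xx, sub_self]
  have := mul_eq_zero_of_re_trace_conj H.posSemidef (by rw [trace_sub_conj, Complex.zero_re])
  rwa [sub_mul, sub_eq_zero] at this

lemma commute_state (H : MatchedFamilies h X X') (c c' : ι) : Commute (X c c') h := by
  rw [Commute, SemiconjBy, ← H.conjTranspose_mul_eq_mul, H.conjTranspose_mul_state]

lemma mul_state_eq (H : MatchedFamilies h X X') (c c' : ι) : X c c' * h = X' c c' * h := by
  rw [(H.commute_state c c').eq, (H.symm.commute_state c c').eq, H.mul_eq]

lemma mul_mul_state (H : MatchedFamilies h X X') (c c' d d' : ι) :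
    X c c' * X d d' * h = X d d' * X c c' * h := by
  calc X c c' * X d d' * h = X c c' * X' d d' * h := by rw [mul_assoc, H.mul_state_eq, mul_assoc]
    _ = X' d d' * (h * X c c') := by
        rw [← (H.commute d d' c c').eq, mul_assoc, (H.commute_state c c').eq]
    _ = X d d' * X c c' * h := by
        rw [← mul_assoc, ← H.mul_state_eq, mul_assoc, ← (H.commute_state c c').eq, mul_assoc]

end MatchedFamilies

/-- A commuting family `x c c'` of operators that commutes with `r` and is Hermitian in the sense
that `(x c' c)ᴴ = x c c'`: a `*`-commutative family. -/
structure IsCommutingFamily (r : Matrix n n ℂ) (x : ι → ι → Matrix n n ℂ) : Prop where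
  conjTranspose_eq : ∀ c c', (x c' c)ᴴ = x c c'
  commute : ∀ c c' d d', Commute (x c c') (x d d')
  commute_state : ∀ c c', Commute (x c c') r

end MatchedFamilies

section MarkovBothWays

variable {n m x y z : Type*} [Fintype m] [DecidableEq m] [Fintype x] [DecidableEq x] [Fintype y]
  [DecidableEq y]

lemma MatchedFamilies.isCommutingFamily {f : m ≃ y × x} {h : Matrix m m ℂ}
    {X : z → z → Matrix y y ℂ} {X' : z → z → Matrix m m ℂ}
    (H : MatchedFamilies h (fun c c' => ampl f (X c c')) X')
    (hl : ∀ c c', supportProj (ptrace f h) * X c c' = X c c')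
    (hr : ∀ c c', X c c' * supportProj (ptrace f h) = X c c') :
    IsCommutingFamily (ptrace f h) X := by
  have cancel {S T : Matrix y y ℂ} (hST : S * ptrace f h = T * ptrace f h) :
      S * supportProj (ptrace f h) = T * supportProj (ptrace f h) := by
    rw [← self_mul_pinv (ptrace_posSemidef f H.posSemidef).1, ← mul_assoc, ← mul_assoc, hST]
  refine ⟨fun c c' => ?_, fun c c' d d' => ?_, fun c c' => ?_⟩
  · have hadj : (X c' c)ᴴ * supportProj (ptrace f h) = (X c' c)ᴴ := by
      simpa only [conjTranspose_mul, (supportProj_isHermitian _).eq] using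
        congrArg conjTranspose (hl c' c)
    have hstar := congrArg (ptrace f) (H.conjTranspose_mul_eq_mul c c')
    rw [ampl_conjTranspose, ptrace_ampl_mul, ptrace_ampl_mul] at hstar
    rw [← hadj, cancel hstar, hr]
  · have hcomm := congrArg (ptrace f) (H.mul_mul_state c c' d d')
    simp only [← map_mul, ptrace_ampl_mul] at hcomm
    have hcomm' := cancel hcomm
    rwa [mul_assoc, mul_assoc, hr, hr] at hcomm'
  · have hstate := congrArg (ptrace f) (H.commute_state c c').eq
    rwa [ptrace_ampl_mul, ptrace_mul_ampl] at hstate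

variable [Fintype n] [DecidableEq n] [Fintype z] [DecidableEq z] {e : n ≃ m × z} {f : m ≃ y × x}
  {ρ : Matrix n n ℂ}

theorem IsMarkov.matchedFamilies (hYX : IsMarkov e f ρ)
    (hXY : IsMarkov e (f.trans (Equiv.prodComm y x)) ρ) (hρ : ρ.PosSemidef) :
    MatchedFamilies (ptrace e ρ) (fun c c' => ampl f (markovBlock e f ρ c c'))
      (fun c c' => ampl (f.trans (Equiv.prodComm y x))
        (markovBlock e (f.trans (Equiv.prodComm y x)) ρ c c')) where
  posSemidef := ptrace_posSemidef e hρ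
  mul_eq c c' := by rw [hYX.mul_ampl_markovBlock hρ, hXY.mul_ampl_markovBlock hρ]
  conjTranspose_mul_eq c c' := by
    rw [hYX.mul_ampl_markovBlock hρ, hYX.mul_ampl_markovBlock hρ, conjTranspose_block, hρ.1.eq]
  commute_supportProj := hYX.commute_supportProj_markovBlock hρ
  commute_supportProj' := hXY.commute_supportProj_markovBlock hρ
  commute _ _ _ _ := (commute_ampl_ampl_prodComm f _ _).symm
  commute_conjTranspose c c' d d' := by
    rw [ampl_conjTranspose]
    exact (commute_ampl_ampl_prodComm f _ _).symm

end MarkovBothWays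

/-! ### Joint diagonalisation -/

section JointDiagonalisation

lemma exists_orthonormalBasis_joint_eigenvectors {𝕜 E n ι : Type*} [RCLike 𝕜]
    [NormedAddCommGroup E] [InnerProductSpace 𝕜 E] [FiniteDimensional 𝕜 E] [Fintype n]
    (hn : Module.finrank 𝕜 E = Fintype.card n) {L : ι → E →ₗ[𝕜] E}
    (hL : ∀ i, (L i).IsSymmetric) (hcomm : Pairwise (Function.onFun Commute L)) :
    ∃ (b : OrthonormalBasis n 𝕜 E) (γ : n → ι → 𝕜), ∀ k i, L i (b k) = γ k i • b k := by
  classical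
  have hint := LinearMap.IsSymmetric.directSum_isInternal_of_pairwise_commute hL hcomm
  have hint' := DirectSum.isInternal_ne_bot_iff.mpr hint
  have horth := (LinearMap.IsSymmetric.orthogonalFamily_iInf_eigenspaces hL).comp
    (Subtype.val_injective (p := fun γ : ι → 𝕜 => (⨅ j, Module.End.eigenspace (L j) (γ j)) ≠ ⊥))
  have := hint.submodule_iSupIndep.fintypeNeBotOfFiniteDimensional
  let e := Fintype.equivFin n
  refine ⟨(hint'.subordinateOrthonormalBasis hn horth).reindex e.symm,
    fun k => (hint'.subordinateOrthonormalBasisIndex hn (e k) horth).1, fun k i => ?_⟩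
  rw [OrthonormalBasis.reindex_apply, Equiv.symm_symm]
  exact Module.End.mem_eigenspace_iff.mp ((Submodule.mem_iInf _).mp
    (hint'.subordinateOrthonormalBasis_subordinate hn (e k) horth) i)

variable {n ι : Type*} [Fintype n] [DecidableEq n]

/-- The functional calculus `d ↦ U (diag d) Uᴴ` of the orthonormal basis formed by the columns of
the unitary `U`. -/
def diagHom (U : unitaryGroup n ℂ) : (n → ℂ) →⋆ₐ[ℂ] Matrix n n ℂ :=
  (Unitary.conjStarAlgAut ℂ (Matrix n n ℂ) U).toStarAlgHom.comp
    { diagonalAlgHom ℂ with map_star' := fun d => (diagonal_conjTranspose d).symm }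

lemma diagHom_apply (U : unitaryGroup n ℂ) (d : n → ℂ) :
    diagHom U d = U * diagonal d * (U : Matrix n n ℂ)ᴴ :=
  rfl

lemma diagHom_injective (U : unitaryGroup n ℂ) : Function.Injective (diagHom U) :=
  (Unitary.conjStarAlgAut ℂ (Matrix n n ℂ) U).injective.comp diagonal_injective

lemma trace_diagHom (U : unitaryGroup n ℂ) (d : n → ℂ) : (diagHom U d).trace = ∑ b, d b := by
  rw [diagHom_apply, trace_mul_comm, ← Matrix.mul_assoc,
    show (U : Matrix n n ℂ)ᴴ * U = 1 from UnitaryGroup.star_mul_self U, Matrix.one_mul,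
    trace_diagonal]

lemma exists_eq_diagHom_of_isHermitian {T : ι → Matrix n n ℂ} (hT : ∀ i, (T i).IsHermitian)
    (hcomm : ∀ i j, Commute (T i) (T j)) :
    ∃ (U : unitaryGroup n ℂ) (d : ι → n → ℂ), ∀ i, T i = diagHom U (d i) := by
  obtain ⟨b, γ, hb⟩ := exists_orthonormalBasis_joint_eigenvectors finrank_euclideanSpace
    (fun i => isSymmetric_toEuclideanLin_iff.mpr (hT i)) (fun i j _ => by
      refine LinearMap.ext fun v => ?_
      simp only [Module.End.mul_apply, toLpLin_apply, mulVec_mulVec, (hcomm i j).eq])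
  let U : unitaryGroup n ℂ :=
    ⟨_, (EuclideanSpace.basisFun n ℂ).toMatrix_orthonormalBasis_mem_unitary b⟩
  refine ⟨U, fun i k => γ k i, fun i => ?_⟩
  have hTU : T i * U = U * diagonal (fun k => γ k i) := by
    ext a k
    have := congrArg (fun v : EuclideanSpace ℂ n => v a) (hb k i)
    rw [mul_diagonal, mul_comm]
    exact this
  rw [diagHom_apply, ← hTU, Matrix.mul_assoc,
    show (U : Matrix n n ℂ) * (U : Matrix n n ℂ)ᴴ = 1 from Unitary.mul_star_self_of_mem U.2,
    Matrix.mul_one]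

/-- Apply the Hermitian case to the real and imaginary parts of the family. -/
lemma exists_eq_diagHom {T : ι → Matrix n n ℂ} (hcomm : ∀ i j, Commute (T i) (T j))
    (hcomm' : ∀ i j, Commute (T i) (T j)ᴴ) :
    ∃ (U : unitaryGroup n ℂ) (d : ι → n → ℂ), ∀ i, T i = diagHom U (d i) := by
  let R : ι ⊕ ι → Matrix n n ℂ := Sum.elim (fun i => realPart (T i)) fun i => imaginaryPart (T i)
  have commute_R (s : ι ⊕ ι) {M : Matrix n n ℂ} (h : ∀ i, Commute (T i) M)
      (h' : ∀ i, Commute (T i)ᴴ M) : Commute (R s) M := by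
    rcases s with i | i
    · simpa only [R, Sum.elim_inl, realPart_apply_coe, star_eq_conjTranspose] using
        ((h i).add_left (h' i)).smul_left (2 : ℝ)⁻¹
    · simpa only [R, Sum.elim_inr, imaginaryPart_apply_coe, star_eq_conjTranspose] using
        (((h i).sub_left (h' i)).smul_left (2 : ℝ)⁻¹).smul_left (-Complex.I)
  have hcommR (s t : ι ⊕ ι) : Commute (R s) (R t) :=
    commute_R s (fun i => (commute_R t (fun j => hcomm j i) fun j => (hcomm' i j).symm).symm)
      fun i => (commute_R t (fun j => hcomm' j i) fun j => (hcomm i j).star_star.symm).symm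
  obtain ⟨U, d, hd⟩ := exists_eq_diagHom_of_isHermitian (T := R)
    (Sum.rec (fun i => (realPart (T i)).2) fun i => (imaginaryPart (T i)).2) hcommR
  refine ⟨U, fun i => d (Sum.inl i) + Complex.I • d (Sum.inr i), fun i => ?_⟩
  rw [map_add, map_smul, ← hd, ← hd]
  exact (realPart_add_I_smul_imaginaryPart (T i)).symm

lemma IsCommutingFamily.exists_eq_diagHom {r : Matrix n n ℂ} {X : ι → ι → Matrix n n ℂ}
    (h : IsCommutingFamily r X) (hr : r.IsHermitian) :
    ∃ (U : unitaryGroup n ℂ) (q : n → ℝ) (κ : n → Matrix ι ι ℂ),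
      r = diagHom U (fun b => q b) ∧ (∀ c c', X c c' = diagHom U fun b => κ b c c') ∧
      ∀ b, (κ b).IsHermitian := by
  let T : Option (ι × ι) → Matrix n n ℂ := fun i => i.elim r fun c => X c.1 c.2
  have hcomm : ∀ i j, Commute (T i) (T j) := by
    rintro (_ | c) (_ | d)
    exacts [Commute.refl r, (h.commute_state d.1 d.2).symm, h.commute_state c.1 c.2,
      h.commute c.1 c.2 d.1 d.2]
  have hcomm' : ∀ i j, Commute (T i) (T j)ᴴ := by
    rintro i (_ | d)
    · exact hr.eq.symm ▸ hcomm i none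
    · exact (h.conjTranspose_eq d.2 d.1).symm ▸ hcomm i (some (d.2, d.1))
  obtain ⟨U, d, hd⟩ := QuantumMarkov.exists_eq_diagHom hcomm hcomm'
  have star_eq_of_conjTranspose_eq {i j : Option (ι × ι)} (hij : (T i)ᴴ = T j) :
      star (d i) = d j := by
    rw [hd, hd, ← star_eq_conjTranspose, ← map_star] at hij
    exact diagHom_injective U hij
  refine ⟨U, fun b => (d none b).re, fun b => of fun c c' => d (some (c, c')) b, ?_,
    fun c c' => hd (some (c, c')), fun b => ?_⟩
  · rw [show r = _ from hd none]
    have hstar := star_eq_of_conjTranspose_eq (i := none) (j := none) hr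
    exact congrArg _ (funext fun b => (Complex.conj_eq_iff_re.mp (congrFun hstar b)).symm)
  · ext c c'
    exact congrFun (star_eq_of_conjTranspose_eq (i := some (c', c)) (j := some (c, c'))
      (h.conjTranspose_eq c c')) b

end JointDiagonalisation

/-- If two commuting diagonalisations `φ`, `ψ` agree on `h` for enough functions `χ i` to separate
the labels, then `φ (1_b) * ψ (1_a) * h` vanishes unless the labels of `b` and `a` coincide. -/
lemma algHom_comp_mul_eq {𝕜 R α β K ι : Type*} [Field 𝕜] [Ring R] [Algebra 𝕜 R] [Finite α]
    [Finite β] {φ : (β → 𝕜) →ₐ[𝕜] R} {ψ : (α → 𝕜) →ₐ[𝕜] R}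
    (hcomm : ∀ u v, Commute (φ u) (ψ v)) {κ : β → K} {κ' : α → K} {χ : ι → K → 𝕜}
    (hχ : ∀ k k', (∀ i, χ i k = χ i k') → k = k') {h : R}
    (heq : ∀ i, φ (χ i ∘ κ) * h = ψ (χ i ∘ κ') * h) (g : K → 𝕜) :
    φ (g ∘ κ) * h = ψ (g ∘ κ') * h := by
  classical
  have := Fintype.ofFinite α
  have := Fintype.ofFinite β
  let E (b : β) (a : α) : R := φ (Pi.single b 1) * ψ (Pi.single a 1)
  have E_mul_left (u : β → 𝕜) (b : β) (a : α) : E b a * φ u = u b • E b a := by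
    rw [mul_assoc, ← (hcomm _ _).eq, ← mul_assoc, ← map_mul, ← smul_mul_assoc, ← map_smul]
    congr 2
    ext i
    rcases eq_or_ne i b with rfl | hi <;> simp [*]
  have E_mul_right (v : α → 𝕜) (b : β) (a : α) : E b a * ψ v = v a • E b a := by
    rw [mul_assoc, ← map_mul, ← mul_smul_comm, ← map_smul]
    congr 2
    ext i
    rcases eq_or_ne i a with rfl | hi <;> simp [*]
  have sum_E : ∑ b, ∑ a, E b a = 1 := by
    simp only [E, ← Finset.mul_sum, ← Finset.sum_mul, ← map_sum]
    rw [show ∑ b, Pi.single b 1 = (1 : β → 𝕜) from Finset.univ_sum_single _,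
      show ∑ a, Pi.single a 1 = (1 : α → 𝕜) from Finset.univ_sum_single _, map_one, map_one,
      mul_one]
  have E_mul_eq (b : β) (a : α) : E b a * (φ (g ∘ κ) * h) = E b a * (ψ (g ∘ κ') * h) := by
    simp only [← mul_assoc, E_mul_left, E_mul_right, smul_mul_assoc, Function.comp_apply]
    by_cases hba : κ b = κ' a
    · rw [hba]
    obtain ⟨i, hi⟩ := not_forall.mp (mt (hχ _ _) hba)
    have hzero := congrArg (E b a * ·) (heq i)
    simp only [← mul_assoc, E_mul_left, E_mul_right, smul_mul_assoc, Function.comp_apply] at hzero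
    rw [← sub_eq_zero, ← sub_smul, smul_eq_zero_iff_right (sub_ne_zero.mpr hi)] at hzero
    rw [hzero, smul_zero, smul_zero]
  rw [← one_mul (φ (g ∘ κ) * h), ← one_mul (ψ (g ∘ κ') * h), ← sum_E]
  simp only [Finset.sum_mul, E_mul_eq]

/-! ### Entropy of block-diagonal matrices -/

section BlockDiagonalEntropy

lemma blockDiagonal_posSemidef {n J : Type*} [Finite n] [Finite J] [DecidableEq J]
    {X : J → Matrix n n ℂ} (hX : ∀ j, (X j).PosSemidef) : (blockDiagonal X).PosSemidef := by
  have := Fintype.ofFinite n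
  have := Fintype.ofFinite J
  choose B hB using fun j => exists_eq_conjTranspose_mul_self (hX j)
  rw [funext hB, blockDiagonal_mul, ← blockDiagonal_conjTranspose]
  exact posSemidef_conjTranspose_mul_self _

variable {n J : Type*} [Fintype n] [DecidableEq n] [Fintype J] [DecidableEq J]

lemma vNEntropy_conj {M : Matrix n n ℂ} (hM : M.IsHermitian) (U : unitaryGroup n ℂ) :
    vNEntropy ((U : Matrix n n ℂ) * M * (U : Matrix n n ℂ)ᴴ) = vNEntropy M := by
  rw [vNEntropy_eq_sum_roots hM, vNEntropy_eq_sum_roots (isHermitian_mul_mul_conjTranspose _ hM),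
    charpoly_mul_comm, ← Matrix.mul_assoc,
    show (U : Matrix n n ℂ)ᴴ * U = 1 from UnitaryGroup.star_mul_self U, Matrix.one_mul]

lemma vNEntropy_diagonal (q : n → ℝ) :
    vNEntropy (diagonal fun b => (q b : ℂ)) = -∑ b, q b * Real.logb 2 (q b) := by
  have hherm : (diagonal fun b => (q b : ℂ)).IsHermitian :=
    isHermitian_diagonal_iff.mpr fun b => Complex.conj_ofReal (q b)
  rw [vNEntropy_eq_sum_roots hherm, charpoly_diagonal,
    Polynomial.roots_prod _ _ (Finset.prod_ne_zero_iff.mpr fun b _ => Polynomial.X_sub_C_ne_zero _),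
    Multiset.map_bind, Multiset.sum_bind, ← Finset.sum_neg_distrib]
  simp only [Polynomial.roots_X_sub_C, Multiset.map_singleton, Multiset.sum_singleton,
    Complex.ofReal_re]
  rfl

lemma vNEntropy_diagHom (U : unitaryGroup n ℂ) (q : n → ℝ) :
    vNEntropy (diagHom U fun b => (q b : ℂ)) = -∑ b, q b * Real.logb 2 (q b) := by
  rw [diagHom_apply, vNEntropy_conj _ U, vNEntropy_diagonal]
  exact isHermitian_diagonal_iff.mpr fun b => Complex.conj_ofReal (q b)

lemma vNEntropy_smul {N : Matrix n n ℂ} (hN : N.IsHermitian) (q : ℝ) :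
    vNEntropy ((q : ℂ) • N) = q * vNEntropy N - q * N.trace.re * Real.logb 2 q := by
  have hspec : N = diagHom hN.eigenvectorUnitary fun b => (hN.eigenvalues b : ℂ) :=
    hN.spectral_theorem
  have htrace : N.trace.re = ∑ b, hN.eigenvalues b := by
    rw [hN.trace_eq_sum_eigenvalues]
    simp
  have hsmul : (q : ℂ) • N =
      diagHom hN.eigenvectorUnitary fun b => ((q * hN.eigenvalues b : ℝ) : ℂ) := by
    conv_lhs => rw [hspec, ← map_smul]
    congr 1 with b
    simp
  rw [hsmul, vNEntropy_diagHom, htrace, vNEntropy, dif_pos hN, ← Finset.sum_neg_distrib,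
    ← Finset.sum_neg_distrib, Finset.mul_sum, Finset.mul_sum, Finset.sum_mul,
    ← Finset.sum_sub_distrib]
  refine Finset.sum_congr rfl fun b _ => ?_
  rcases eq_or_ne q 0 with rfl | hq
  · simp
  rcases eq_or_ne (hN.eigenvalues b) 0 with hb | hb
  · simp [hb]
  rw [Real.logb_mul hq hb]
  ring

lemma charpoly_blockDiagonal {R : Type*} [CommRing R] (X : J → Matrix n n R) :
    (blockDiagonal X).charpoly = ∏ j, (X j).charpoly := by
  simp only [charpoly, ← det_blockDiagonal]
  congr 1
  ext ⟨a, j⟩ ⟨b, k⟩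
  rcases eq_or_ne j k with rfl | hjk
  · simp [charmatrix_apply, blockDiagonal_apply, diagonal_apply]
  · simp [blockDiagonal_apply, hjk]

lemma vNEntropy_blockDiagonal {X : J → Matrix n n ℂ} (hX : ∀ j, (X j).IsHermitian) :
    vNEntropy (blockDiagonal X) = ∑ j, vNEntropy (X j) := by
  rw [vNEntropy_eq_sum_roots (isHermitian_blockDiagonal_iff.mpr hX), charpoly_blockDiagonal,
    Polynomial.roots_prod _ _ (Finset.prod_ne_zero_iff.mpr fun j _ => (X j).charpoly_monic.ne_zero),
    Multiset.map_bind, Multiset.sum_bind]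
  exact Finset.sum_congr rfl fun j _ => (vNEntropy_eq_sum_roots (hX j)).symm

lemma vNEntropy_blockDiagonal_smul {q : J → ℝ} {N : J → Matrix n n ℂ}
    (hN : ∀ j, (N j).IsHermitian) (htrace : ∀ j, (q j : ℂ) * (N j).trace = q j) :
    vNEntropy (blockDiagonal fun j => (q j : ℂ) • N j) =
      vNEntropy (diagonal fun j => (q j : ℂ)) + ∑ j, q j * vNEntropy (N j) := by
  have htrace_re (j : J) : q j * (N j).trace.re = q j := by
    simpa using congrArg Complex.re (htrace j)
  rw [vNEntropy_blockDiagonal fun j => (hN j).smul (Complex.conj_ofReal (q j)), vNEntropy_diagonal]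
  simp only [vNEntropy_smul (hN _), htrace_re, Finset.sum_sub_distrib]
  ring

/-- With `X j = (B j)ᴴ * B j`, both sides are the entropy of the column of the `B j`. -/
lemma vNEntropy_blockDiagonal_eq_sum {X : J → Matrix n n ℂ} (hX : ∀ j, (X j).PosSemidef)
    (horth : Pairwise fun j k => X j * X k = 0) :
    vNEntropy (blockDiagonal X) = vNEntropy (∑ j, X j) := by
  choose B hB using fun j => exists_eq_conjTranspose_mul_self (hX j)
  have hBo {j k : J} (hjk : j ≠ k) : B j * (B k)ᴴ = 0 :=
    (conjTranspose_mul_self_mul_eq_zero _ _).mp <|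
      (mul_conjTranspose_mul_self_eq_zero _ _).mp <| hB j ▸ hB k ▸ horth hjk
  let M : Matrix (n × J) n ℂ := of fun p i => B p.2 p.1 i
  have hsum : Mᴴ * M = ∑ j, X j := by
    ext a b
    rw [Matrix.mul_apply, Fintype.sum_prod_type_right, Matrix.sum_apply]
    refine Finset.sum_congr rfl fun j _ => ?_
    rw [hB j, Matrix.mul_apply]
    rfl
  have hdiag : M * Mᴴ = blockDiagonal B * (blockDiagonal B)ᴴ := by
    rw [blockDiagonal_conjTranspose, ← blockDiagonal_mul]
    ext ⟨a, j⟩ ⟨b, k⟩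
    rw [blockDiagonal_apply, show (M * Mᴴ) (a, j) (b, k) = (B j * (B k)ᴴ) a b from rfl]
    split_ifs with hjk
    · rw [← show j = k from hjk]
    · rw [hBo hjk]
      rfl
  rw [← hsum, ← vNEntropy_mul_conjTranspose, hdiag, vNEntropy_mul_conjTranspose,
    blockDiagonal_conjTranspose, ← blockDiagonal_mul, ← funext hB]

end BlockDiagonalEntropy

/-! ### Conditional states and common classical registers -/

section CondState

variable {n m y z w J : Type*} [Fintype n] [DecidableEq n] [Fintype m] [DecidableEq m]
  [Fintype z] [DecidableEq z]

/-- The unnormalised state left on `m` when the outcome `P` is obtained on the factor `z` of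
`n ≃ m × z`. -/
def condState (e : n ≃ m × z) (P : Matrix z z ℂ) (M : Matrix n n ℂ) : Matrix m m ℂ :=
  ptrace e (ampl (e.trans (Equiv.prodComm m z)) P * M)

lemma condState_apply (e : n ≃ m × z) (P : Matrix z z ℂ) (M : Matrix n n ℂ) (a a' : m) :
    condState e P M a a' = (P * block (e.trans (Equiv.prodComm m z)) M a a').trace := by
  rw [condState, ptrace_apply, ← block_ampl_mul]
  rfl

lemma condState_eq_ptrace_conj (e : n ≃ m × z) {P : Matrix z z ℂ} (hP : IsStarProjection P)
    (M : Matrix n n ℂ) :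
    condState e P M = ptrace e (ampl (e.trans (Equiv.prodComm m z)) P * M *
      (ampl (e.trans (Equiv.prodComm m z)) P)ᴴ) := by
  ext a a'
  rw [ampl_conjTranspose, ← star_eq_conjTranspose, hP.isSelfAdjoint.star_eq, condState_apply]
  nth_rw 1 [← hP.isIdempotentElem.eq]
  rw [Matrix.mul_assoc, trace_mul_comm, ← block_ampl_mul, ← block_mul_ampl, ptrace_apply]
  rfl

lemma condState_posSemidef (e : n ≃ m × z) {P : Matrix z z ℂ} (hP : IsStarProjection P)
    {M : Matrix n n ℂ} (hM : M.PosSemidef) : (condState e P M).PosSemidef := by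
  rw [condState_eq_ptrace_conj e hP]
  exact ptrace_posSemidef e (hM.mul_mul_conjTranspose_same _)

lemma sum_condState [Fintype J] (e : n ≃ m × z) {P : J → Matrix z z ℂ} (hP : ∑ k, P k = 1)
    (M : Matrix n n ℂ) : ∑ k, condState e (P k) M = ptrace e M := by
  simp only [condState]
  rw [← map_sum, ← Finset.sum_mul, ← map_sum, hP, map_one, Matrix.one_mul]

lemma ptrace_condState [Fintype y] [DecidableEq y] [Fintype w] (e : n ≃ m × z) (f : m ≃ y × w)
    (P : Matrix z z ℂ) (M : Matrix n n ℂ) :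
    ptrace f (condState e P M) = condState (Equiv.refl _) P (ptrace (regroup e f) M) := by
  ext b b'
  simp only [ptrace_apply, condState_apply, ← trace_sum, ← Finset.mul_sum]
  congr 2
  ext c c'
  simp only [Matrix.sum_apply, block, submatrix_apply, ptrace_apply]
  rfl

end CondState

section LabelProj

variable {n K : Type*} [Fintype n] [DecidableEq n]

/-- The projection onto the columns of `U` that carry the label `k`. -/
noncomputable def labelProj (U : unitaryGroup n ℂ) (κ : n → K) (k : K) : Matrix n n ℂ :=
  diagHom U (Set.indicator {k} 1 ∘ κ)

lemma isStarProjection_labelProj (U : unitaryGroup n ℂ) (κ : n → K) (k : K) :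
    IsStarProjection (labelProj U κ k) := by
  classical
  refine IsStarProjection.map (f := diagHom U) ⟨?_, ?_⟩
  · ext b
    by_cases hb : κ b = k <;> simp [hb]
  · ext b
    by_cases hb : κ b = k <;> simp [hb]

lemma labelProj_mul_labelProj (U : unitaryGroup n ℂ) (κ : n → K) {k l : K} (hkl : k ≠ l) :
    labelProj U κ k * labelProj U κ l = 0 := by
  classical
  rw [labelProj, labelProj, ← map_mul]
  convert map_zero (diagHom U)
  ext b
  by_cases hb : κ b = k <;> simp [hb, hkl]

lemma sum_labelProj (U : unitaryGroup n ℂ) (κ : n → K) [Fintype (Set.range κ)] :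
    ∑ k : Set.range κ, labelProj U κ k = 1 := by
  classical
  simp only [labelProj]
  rw [← map_sum, ← map_one (diagHom U)]
  congr 1
  ext b
  rw [Finset.sum_apply, Finset.sum_eq_single ⟨κ b, b, rfl⟩]
  · simp
  · intro k _ hk
    have hbk : κ b ≠ k := fun h => hk (Subtype.ext h.symm)
    simp [hbk]
  · simp

lemma sum_range_sum_indicator_mul {α R : Type*} [Fintype α] [NonUnitalNonAssocSemiring R]
    (κ : α → K) [Fintype (Set.range κ)] (q : α → R) (g : K → R) :
    ∑ k : Set.range κ, (∑ b, Set.indicator (κ ⁻¹' {k.1}) q b) * g k = ∑ b, q b * g (κ b) := by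
  simp only [Finset.sum_mul]
  rw [Finset.sum_comm]
  refine Finset.sum_congr rfl fun b _ => ?_
  rw [Finset.sum_eq_single ⟨κ b, b, rfl⟩]
  · simp
  · intro k _ hk
    have hbk : κ b ≠ k := fun h => hk (Subtype.ext h.symm)
    simp [hbk]
  · simp

end LabelProj

section Register

universe u

variable {n m x y : Type*} {z : Type u} [Fintype m] [DecidableEq m] [Fintype x] [DecidableEq x]
  [Fintype y] [DecidableEq y]

/-- Projective measurements `PY` and `PX` of the two parties of the state `h` on `m ≃ y × x` whose
outcomes agree with certainty: both parties can read off a common classical register. -/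
structure IsCommonRegister {J : Type*} [Fintype J] (f : m ≃ y × x) (h : Matrix m m ℂ)
    (PY : J → Matrix y y ℂ) (PX : J → Matrix x x ℂ) : Prop where
  isStarProjection_left : ∀ k, IsStarProjection (PY k)
  isStarProjection_right : ∀ k, IsStarProjection (PX k)
  mul_eq_zero : Pairwise fun k l => PY k * PY l = 0
  sum_eq_one : ∑ k, PY k = 1
  ampl_mul_eq : ∀ k, ampl f (PY k) * h = ampl (f.trans (Equiv.prodComm y x)) (PX k) * h

section Entropy

variable [Fintype z] {σ : Matrix (y × z) (y × z) ℂ} {U : unitaryGroup y ℂ} {q : y → ℝ}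
  {κ : y → Matrix z z ℂ}

lemma mul_trace_eq_of_block_eq_diagHom (hq : ptrace (Equiv.refl _) σ = diagHom U fun b => q b)
    (hσ : ∀ c c', block (Equiv.refl _) σ c c' = diagHom U fun b => q b * κ b c c') (b : y) :
    (q b : ℂ) * (κ b).trace = q b := by
  refine congrFun (f := fun b => (q b : ℂ) * (κ b).trace)
    (diagHom_injective U (Eq.trans ?_ hq)) b
  simp only [ptrace_eq_sum_block, hσ, ← map_sum]
  congr 1 with b
  simp [trace, Finset.mul_sum]

variable [DecidableEq z]

lemma vNEntropy_eq_of_block_eq_diagHom {N : y → Matrix z z ℂ} (hN : ∀ b, (N b).IsHermitian)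
    (hσ : ∀ c c', block (Equiv.refl _) σ c c' = diagHom U fun b => N b c c') :
    vNEntropy σ = vNEntropy (blockDiagonal N) := by
  let W : unitaryGroup (y × z) ℂ :=
    ⟨ampl (Equiv.refl _) U, Unitary.map_mem (ampl (Equiv.refl _)) U.2⟩
  let D := (blockDiagonal N).submatrix (Equiv.prodComm y z) (Equiv.prodComm y z)
  have hherm : (blockDiagonal N).IsHermitian := isHermitian_blockDiagonal_iff.mpr hN
  have hconj : σ = (W : Matrix (y × z) (y × z) ℂ) * D * (W : Matrix (y × z) (y × z) ℂ)ᴴ := by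
    refine ext_block (Equiv.refl _) fun c c' => ?_
    rw [hσ, show (W : Matrix (y × z) (y × z) ℂ) = ampl (Equiv.refl _) U from rfl,
      ampl_conjTranspose, block_mul_ampl, block_ampl_mul, diagHom_apply]
    rfl
  rw [hconj, vNEntropy_conj (hherm.submatrix _), vNEntropy_submatrix hherm]

lemma condState_labelProj
    (hσ : ∀ c c', block (Equiv.refl _) σ c c' = diagHom U fun b => q b * κ b c c')
    (k : Matrix z z ℂ) :
    condState (Equiv.prodComm y z) (labelProj U κ k) σ =
      ((∑ b, Set.indicator (κ ⁻¹' {k}) q b : ℝ) : ℂ) • k := by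
  ext c c'
  rw [condState_apply]
  change (labelProj U κ k * block (Equiv.refl _) σ c c').trace = _
  rw [hσ, labelProj, ← map_mul, trace_diagHom, Matrix.smul_apply, smul_eq_mul, Complex.ofReal_sum,
    Finset.sum_mul]
  refine Finset.sum_congr rfl fun b _ => ?_
  by_cases hb : κ b = k <;> simp [hb]

/-- The register retains all the information about `z` that `y` carries: both conditional entropies
are the mean entropy of the labels. -/
lemma vNEntropy_condState_labelProj [Fintype (Set.range κ)] [DecidableEq (Set.range κ)]
    (hκ : ∀ b, (κ b).IsHermitian) (hq : ptrace (Equiv.refl _) σ = diagHom U fun b => q b)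
    (hσ : ∀ c c', block (Equiv.refl _) σ c c' = diagHom U fun b => q b * κ b c c') :
    vNEntropy (blockDiagonal fun k : Set.range κ =>
        condState (Equiv.prodComm y z) (labelProj U κ k) σ) -
      vNEntropy (diagonal fun k : Set.range κ =>
        (condState (Equiv.prodComm y z) (labelProj U κ k) σ).trace) =
      vNEntropy σ - vNEntropy (ptrace (Equiv.refl _) σ) := by
  have htrace := mul_trace_eq_of_block_eq_diagHom hq hσ
  let p (k : Set.range κ) : ℝ := ∑ b, Set.indicator (κ ⁻¹' {k.1}) q b
  have hptrace (k : Set.range κ) : (p k : ℂ) * k.1.trace = p k := by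
    rw [Complex.ofReal_sum, Finset.sum_mul]
    refine Finset.sum_congr rfl fun b _ => ?_
    by_cases hb : κ b = k
    · simpa [hb] using htrace b
    · simp [hb]
  have hpherm (k : Set.range κ) : k.1.IsHermitian := by
    obtain ⟨_, b, rfl⟩ := k
    exact hκ b
  simp only [condState_labelProj hσ, trace_smul, smul_eq_mul]
  change vNEntropy (blockDiagonal fun k => (p k : ℂ) • k.1) -
    vNEntropy (diagonal fun k => (p k : ℂ) * k.1.trace) = _
  simp only [hptrace]
  rw [vNEntropy_blockDiagonal_smul hpherm hptrace, sum_range_sum_indicator_mul κ q vNEntropy,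
    vNEntropy_eq_of_block_eq_diagHom (fun b => (hκ b).smul (Complex.conj_ofReal (q b))) hσ,
    vNEntropy_blockDiagonal_smul hκ htrace, hq, vNEntropy_diagHom, vNEntropy_diagonal q]
  ring

end Entropy

variable [Fintype n] [DecidableEq n] [Fintype z] [DecidableEq z] {e : n ≃ m × z} {f : m ≃ y × x}
  {ρ : Matrix n n ℂ}

/-- The operators `ρ_Y⁻¹ ρ_YZ` and `ρ_X⁻¹ ρ_XZ` act identically on `ρ_XY`, so the labels formed by
their joint eigenvalues are perfectly correlated in that state. -/
lemma IsMarkov.exists_labels (hYX : IsMarkov e f ρ)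
    (hXY : IsMarkov e (f.trans (Equiv.prodComm y x)) ρ) (hρ : ρ.PosSemidef) :
    ∃ (U : unitaryGroup y ℂ) (V : unitaryGroup x ℂ) (q : y → ℝ) (κ : y → Matrix z z ℂ)
      (κ' : x → Matrix z z ℂ), (∀ b, (κ b).IsHermitian) ∧
      (ptrace f (ptrace e ρ) = diagHom U fun b => q b) ∧
      (∀ c c', block (Equiv.refl _) (ptrace (regroup e f) ρ) c c' =
        diagHom U fun b => q b * κ b c c') ∧
      ∀ g : Matrix z z ℂ → ℂ, ampl f (diagHom U (g ∘ κ)) * ptrace e ρ =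
        ampl (f.trans (Equiv.prodComm y x)) (diagHom V (g ∘ κ')) * ptrace e ρ := by
  have H := hYX.matchedFamilies hXY hρ
  have hY := ptrace_posSemidef f H.posSemidef
  obtain ⟨U, q, κ, hU, hκ, hκherm⟩ := (H.isCommutingFamily (supportProj_mul_markovBlock e f ρ)
    (markovBlock_mul_supportProj e f hρ)).exists_eq_diagHom hY.1
  obtain ⟨V, -, κ', -, hκ', -⟩ := (H.symm.isCommutingFamily (supportProj_mul_markovBlock e _ ρ)
    (markovBlock_mul_supportProj e _ hρ)).exists_eq_diagHom (ptrace_posSemidef _ H.posSemidef).1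
  refine ⟨U, V, q, κ, κ', hκherm, hU, fun c c' => ?_, fun g => ?_⟩
  · rw [block_refl_ptrace_regroup, ← hYX.mul_ampl_markovBlock hρ, ptrace_mul_ampl, hU, hκ,
      ← map_mul]
    rfl
  · refine algHom_comp_mul_eq (φ := ((ampl f).comp (diagHom U)).toAlgHom)
      (ψ := ((ampl (f.trans (Equiv.prodComm y x))).comp (diagHom V)).toAlgHom)
      (fun u v => commute_ampl_ampl_prodComm f _ _)
      (χ := fun (i : z × z) (k : Matrix z z ℂ) => k i.1 i.2)
      (fun k k' h => Matrix.ext fun c c' => h (c, c')) (fun i => ?_) g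
    have hi := H.mul_state_eq i.1 i.2
    rw [hκ, hκ'] at hi
    exact hi

theorem IsMarkov.exists_isCommonRegister (hYX : IsMarkov e f ρ)
    (hXY : IsMarkov e (f.trans (Equiv.prodComm y x)) ρ) (hρ : ρ.PosSemidef) :
    ∃ (J : Type u) (_ : Fintype J) (_ : DecidableEq J) (PY : J → Matrix y y ℂ)
      (PX : J → Matrix x x ℂ), IsCommonRegister f (ptrace e ρ) PY PX ∧
      vNEntropy (blockDiagonal fun k =>
          condState (Equiv.prodComm y z) (PY k) (ptrace (regroup e f) ρ)) -
        vNEntropy (diagonal fun k =>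
          (condState (Equiv.prodComm y z) (PY k) (ptrace (regroup e f) ρ)).trace) =
        vNEntropy (ptrace (regroup e f) ρ) - vNEntropy (ptrace f (ptrace e ρ)) := by
  classical
  obtain ⟨U, V, q, κ, κ', hκ, hY, hYZ, hagree⟩ := hYX.exists_labels hXY hρ
  refine ⟨Set.range κ, inferInstance, inferInstance, fun k => labelProj U κ k,
    fun k => labelProj V κ' k, ⟨fun k => isStarProjection_labelProj U κ k,
      fun k => isStarProjection_labelProj V κ' k,
      fun k l hkl => labelProj_mul_labelProj U κ (Subtype.coe_injective.ne hkl),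
      sum_labelProj U κ, fun k => hagree _⟩, ?_⟩
  rw [← ptrace_refl_ptrace_regroup] at hY ⊢
  exact vNEntropy_condState_labelProj hκ hY hYZ

end Register

/-! ### Conditioning a Markov state -/

section MarkovConditioning

variable {n m x y z : Type*} [Fintype n] [DecidableEq n] [Fintype m] [DecidableEq m]
  [Fintype z] [DecidableEq z]

lemma mul_condState_eq_zero_of_supportProj (e : n ≃ m × z) {P : Matrix z z ℂ}
    (hP : IsStarProjection P) {M : Matrix n n ℂ} (hM : M.IsHermitian) {T : Matrix m m ℂ}
    (h : T * condState e P (supportProj M) = 0) : T * condState e P M = 0 := by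
  let Q := ampl (e.trans (Equiv.prodComm m z)) P
  have hQ : Q * supportProj M * Qᴴ = (Q * supportProj M) * (Q * supportProj M)ᴴ := by
    rw [conjTranspose_mul, (supportProj_isHermitian M).eq, ← Matrix.mul_assoc,
      Matrix.mul_assoc Q (supportProj M) (supportProj M), supportProj_mul_supportProj]
  rw [condState_eq_ptrace_conj e hP] at h
  have hzero := ampl_mul_eq_zero e ((supportProj_posSemidef M).mul_mul_conjTranspose_same Q) h
  rw [hQ, mul_self_mul_conjTranspose_eq_zero] at hzero
  rw [condState, ← ptrace_ampl_mul, ← supportProj_mul_self hM, ← Matrix.mul_assoc,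
    ← Matrix.mul_assoc, Matrix.mul_assoc _ _ (supportProj M), hzero, Matrix.zero_mul, map_zero]

variable [Fintype x] [DecidableEq x] [Fintype y] [DecidableEq y] {e : n ≃ m × z} {f : m ≃ y × x}
  {ρ : Matrix n n ℂ}

lemma ampl_regroup_ampl_prodComm (e : n ≃ m × z) (f : m ≃ y × x) (P : Matrix z z ℂ) :
    ampl (regroup e f) (ampl (Equiv.prodComm y z) P) = ampl (e.trans (Equiv.prodComm m z)) P := by
  ext i j
  by_cases hij : (e i).1 = (e j).1
  · simp [ampl_apply, regroup, hij]
  · have hf : ¬((f (e i).1).1 = (f (e j).1).1 ∧ (f (e i).1).2 = (f (e j).1).2) := fun h =>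
      hij (f.injective (Prod.ext h.1 h.2))
    simp +contextual [ampl_apply, regroup, hij, not_and'.mp hf]

/-- The support of a Markov state is the product of the supports of `ρ_XY` and `ρ_YZ`, so outcomes
on `X` and `Z` that exclude each other leave orthogonal states on `Y`. -/
theorem IsMarkov.condState_mul_condState_eq_zero (hmarkov : IsMarkov e f ρ) (hρ : ρ.PosSemidef)
    {PX : Matrix x x ℂ} {PZ : Matrix z z ℂ} (hPX : IsStarProjection PX)
    (hPZ : IsStarProjection PZ)
    (h : ampl e (ampl (f.trans (Equiv.prodComm y x)) PX) *
      (ampl (e.trans (Equiv.prodComm m z)) PZ * ρ) = 0) :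
    condState f PX (ptrace e ρ) * condState (Equiv.refl _) PZ (ptrace (regroup e f) ρ) = 0 := by
  have hXY := ptrace_posSemidef e hρ
  have hYZ := ptrace_posSemidef (regroup e f) hρ
  have hsupp : ampl e (ampl (f.trans (Equiv.prodComm y x)) PX * supportProj (ptrace e ρ)) *
      ampl (regroup e f) (ampl (Equiv.prodComm y z) PZ * supportProj (ptrace (regroup e f) ρ)) =
        0 := by
    rw [map_mul, map_mul, ampl_regroup_ampl_prodComm, Matrix.mul_assoc, ← Matrix.mul_assoc _ _
      (ampl (regroup e f) _), (commute_ampl_ampl_prodComm e _ _).eq, Matrix.mul_assoc _ _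
      (ampl (regroup e f) _), hmarkov.supportProj_mul_supportProj hρ, ← self_mul_pinv hρ.1,
      ← Matrix.mul_assoc, ← Matrix.mul_assoc, Matrix.mul_assoc _ _ ρ, h, Matrix.zero_mul]
  have hcond : condState f PX (supportProj (ptrace e ρ)) *
      condState (Equiv.refl _) PZ (supportProj (ptrace (regroup e f) ρ)) = 0 := by
    have hptrace := congrArg (fun M => ptrace f (ptrace e M)) hsupp
    simp only [ptrace_ampl_mul, ptrace_ampl_regroup, ptrace_mul_ampl, map_zero] at hptrace
    exact hptrace
  have hcond' := congrArg conjTranspose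
    (mul_condState_eq_zero_of_supportProj (Equiv.refl _) hPZ hYZ.1 hcond)
  rw [conjTranspose_mul, (condState_posSemidef _ hPZ hYZ).1.eq,
    (condState_posSemidef _ hPX (supportProj_posSemidef _)).1.eq, conjTranspose_zero] at hcond'
  have hcond'' := congrArg conjTranspose
    (mul_condState_eq_zero_of_supportProj f hPX hXY.1 hcond')
  rwa [conjTranspose_mul, (condState_posSemidef _ hPZ hYZ).1.eq,
    (condState_posSemidef _ hPX hXY).1.eq, conjTranspose_zero] at hcond''

/-- Outcomes that can be read from `X` as well as from `Z` can also be read from `Y`. -/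
theorem IsMarkov.pairwise_condState_mul_eq_zero {J : Type*} (hmarkov : IsMarkov e f ρ)
    (hρ : ρ.PosSemidef) {PX : J → Matrix x x ℂ} {PZ : J → Matrix z z ℂ}
    (hPX : ∀ k, IsStarProjection (PX k)) (hPZ : ∀ k, IsStarProjection (PZ k))
    (horth : Pairwise fun k l => PZ k * PZ l = 0)
    (hagree : ∀ k, ampl (e.trans (Equiv.prodComm m z)) (PZ k) * ρ =
      ampl e (ampl (f.trans (Equiv.prodComm y x)) (PX k)) * ρ) :
    Pairwise fun k l => condState (Equiv.refl _) (PZ k) (ptrace (regroup e f) ρ) *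
      condState (Equiv.refl _) (PZ l) (ptrace (regroup e f) ρ) = 0 := by
  intro k l hkl
  have hcond : condState f (PX k) (ptrace e ρ) =
      condState (Equiv.refl _) (PZ k) (ptrace (regroup e f) ρ) := by
    rw [condState, ← ptrace_ampl_mul, ← hagree, ← ptrace_condState, condState]
  rw [← hcond]
  refine hmarkov.condState_mul_condState_eq_zero hρ (hPX k) (hPZ l) ?_
  rw [← Matrix.mul_assoc, (commute_ampl_ampl_prodComm e _ _).eq, Matrix.mul_assoc, ← hagree,
    ← Matrix.mul_assoc, ← map_mul, horth hkl.symm, map_zero, Matrix.zero_mul]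

end MarkovConditioning

/-! ### The inequality for the purified system -/

section Ensemble

variable {n m z J : Type*} [DecidableEq J]

lemma ptrace_regroup_blockDiagonal [Fintype z] (e : n ≃ m × z) (X : J → Matrix n n ℂ) :
    ptrace (regroup (Equiv.refl (n × J)) e) (blockDiagonal X) =
      blockDiagonal fun k => ptrace e (X k) := by
  ext ⟨a, k⟩ ⟨a', k'⟩
  simp only [ptrace_apply, blockDiagonal_apply, regroup, Equiv.coe_fn_symm_mk, Equiv.refl_symm,
    Equiv.refl_apply, Finset.sum_ite_irrel, Finset.sum_const_zero]

lemma ptrace_prodComm_blockDiagonal [Fintype n] (X : J → Matrix n n ℂ) :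
    ptrace (Equiv.prodComm n J) (blockDiagonal X) = diagonal fun k => (X k).trace := by
  ext k k'
  simp [ptrace_apply, blockDiagonal_apply, diagonal_apply, trace, Finset.sum_ite_irrel]

variable [Fintype n] [Fintype m] [Fintype z]

lemma mul_eq_zero_of_ptrace_mul_ptrace_eq_zero (e : n ≃ m × z) {M N : Matrix n n ℂ}
    (hM : M.PosSemidef) (hN : N.PosSemidef) (h : ptrace e M * ptrace e N = 0) : M * N = 0 := by
  classical
  have hsupp : ampl e (supportProj (ptrace e M)) * N = 0 :=
    ampl_mul_eq_zero e hN (supportProj_mul_eq_zero (ptrace_posSemidef e hM).1 h)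
  have hM' := congrArg conjTranspose (ampl_supportProj_ptrace_mul e hM)
  rw [conjTranspose_mul, ampl_conjTranspose, (supportProj_isHermitian _).eq, hM.1.eq] at hM'
  rw [← hM', Matrix.mul_assoc, hsupp, Matrix.mul_zero]

variable [DecidableEq n] [DecidableEq m] [DecidableEq z]

lemma ampl_mul_eq_ampl_mul (e : n ≃ m × z) {M : Matrix n n ℂ} (hM : M.PosSemidef)
    {S T : Matrix m m ℂ} (h : S * ptrace e M = T * ptrace e M) : ampl e S * M = ampl e T * M := by
  rw [← sub_eq_zero, ← Matrix.sub_mul, ← map_sub]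
  refine ampl_mul_eq_zero e hM ?_
  rw [Matrix.sub_mul, h, sub_self]

/-- Strong subadditivity of the state with an additional register holding `k`, which is determined
by the marginal on `z`. -/
theorem vNEntropy_sum_add_vNEntropy_trace_le [Fintype J] (e : n ≃ m × z) {X : J → Matrix n n ℂ}
    (hX : ∀ k, (X k).PosSemidef)
    (horth : Pairwise fun k l => ptrace (e.trans (Equiv.prodComm m z)) (X k) *
      ptrace (e.trans (Equiv.prodComm m z)) (X l) = 0) :
    vNEntropy (∑ k, X k) + vNEntropy (diagonal fun k => (X k).trace) ≤
      vNEntropy (blockDiagonal fun k => ptrace e (X k)) +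
        vNEntropy (ptrace (e.trans (Equiv.prodComm m z)) (∑ k, X k)) := by
  let e' := regroup (Equiv.refl (n × J)) e
  have hz (k : J) := ptrace_posSemidef (e.trans (Equiv.prodComm m z)) (hX k)
  have hmarginal : ptrace (regroup e' (Equiv.prodComm m J)) (blockDiagonal X) =
      (blockDiagonal fun k => ptrace (e.trans (Equiv.prodComm m z)) (X k)).submatrix
        (Equiv.prodComm J z) (Equiv.prodComm J z) := by
    ext
    rw [← ptrace_regroup_blockDiagonal, submatrix_apply, ptrace_apply, ptrace_apply]
    rfl
  have hssa := strong_subadditivity e' (Equiv.prodComm m J) (blockDiagonal_posSemidef hX)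
  rw [hmarginal, ptrace_regroup_blockDiagonal, ptrace_prodComm_blockDiagonal,
    vNEntropy_submatrix (blockDiagonal_posSemidef hz).1, vNEntropy_blockDiagonal_eq_sum hz horth,
    vNEntropy_blockDiagonal_eq_sum hX fun k l hkl =>
      mul_eq_zero_of_ptrace_mul_ptrace_eq_zero _ (hX k) (hX l) (horth hkl)] at hssa
  simpa only [trace_ptrace, map_sum] using hssa

end Ensemble

section Quadripartite

variable {A B C E : Type*}

/-- `A × B × C × E` with the factor `E` split off. -/
def splitFourth : A × B × C × E ≃ (A × B × C) × E where
  toFun p := ((p.1, p.2.1, p.2.2.1), p.2.2.2)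
  invFun p := (p.1.1, p.1.2.1, p.1.2.2, p.2)
  left_inv _ := rfl
  right_inv _ := rfl

/-- `A × B × C × E` with the factor `C` split off. -/
def splitThird : A × B × C × E ≃ (A × B × E) × C where
  toFun p := ((p.1, p.2.1, p.2.2.2), p.2.2.1)
  invFun p := (p.1.1, p.1.2.1, p.2, p.1.2.2)
  left_inv _ := rfl
  right_inv _ := rfl

/-- `A × B × E` with the factor `B` split off. -/
def splitSecond : A × B × E ≃ (A × E) × B where
  toFun p := ((p.1, p.2.2), p.2.1)
  invFun p := (p.1.1, p.2, p.1.2)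
  left_inv _ := rfl
  right_inv _ := rfl

section Marginals

variable (τ : Matrix (A × B × C × E) (A × B × C × E) ℂ)

lemma ptrace_prodAssoc_ptrace_splitFourth [Fintype C] [Fintype E] :
    ptrace (Equiv.prodAssoc A B C).symm (ptrace splitFourth τ) =
      ptrace (Equiv.prodAssoc A B E).symm (ptrace splitThird τ) := by
  ext
  simp only [ptrace_apply]
  exact Finset.sum_comm

lemma ptrace_prodAssoc_ptrace_prodComm [Fintype A] [Fintype E] :
    ptrace (Equiv.prodAssoc B C E).symm (ptrace (Equiv.prodComm A (B × C × E)) τ) =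
      ptrace (regroup (Equiv.prodAssoc A B C).symm (Equiv.prodComm A B))
        (ptrace splitFourth τ) := by
  ext
  simp only [ptrace_apply]
  exact Finset.sum_comm

lemma ptrace_regroup_ptrace_prodComm [Fintype A] [Fintype C] :
    ptrace (regroup (Equiv.prodComm B (C × E)) (Equiv.prodComm C E))
        (ptrace (Equiv.prodComm A (B × C × E)) τ) =
      ptrace (regroup splitSecond (Equiv.prodComm A E)) (ptrace splitThird τ) := by
  ext
  simp only [ptrace_apply]
  exact Finset.sum_comm

variable [Fintype A] [Fintype B] [Fintype C] [Fintype E]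

lemma SB_eq_vNEntropy_ptrace [DecidableEq B] :
    SB τ = vNEntropy (ptrace (Equiv.prodComm A B)
      (ptrace (Equiv.prodAssoc A B C).symm (ptrace splitFourth τ))) := by
  rw [SB]
  congr 1
  ext
  simp only [ptrace_apply]
  rfl

lemma SBC_eq_vNEntropy_ptrace [DecidableEq B] [DecidableEq C] :
    SBC τ = vNEntropy (ptrace (regroup (Equiv.prodAssoc A B C).symm (Equiv.prodComm A B))
      (ptrace splitFourth τ)) := by
  rw [SBC]
  congr 1
  ext
  simp only [ptrace_apply]
  rfl

lemma SCD_eq_vNEntropy_ptrace [DecidableEq C] [DecidableEq E] :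
    SCD τ = vNEntropy (ptrace (Equiv.prodComm B (C × E))
      (ptrace (Equiv.prodComm A (B × C × E)) τ)) := by
  rw [SCD]
  congr 1
  ext
  simp only [ptrace_apply]
  exact Finset.sum_comm

lemma SD_eq_vNEntropy_ptrace [DecidableEq E] :
    SD τ = vNEntropy (ptrace (Equiv.prodComm C E) (ptrace (Equiv.prodComm B (C × E))
      (ptrace (Equiv.prodComm A (B × C × E)) τ))) := by
  rw [SD]
  congr 1
  ext
  simp only [ptrace_apply]
  exact Finset.sum_comm_cycle.trans (Finset.sum_congr rfl fun c _ => Finset.sum_comm)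

end Marginals

variable [Fintype A] [DecidableEq A] [Fintype B] [DecidableEq B] [Fintype C] [Fintype E]
  {τ : Matrix (A × B × C × E) (A × B × C × E) ℂ}

lemma isMarkov_of_condMutualInfo_AC_B [DecidableEq C]
    (h : SAB τ + SBC τ - SABC τ - SB τ = 0) :
    IsMarkov (Equiv.prodAssoc A B C).symm (Equiv.prodComm A B) (ptrace splitFourth τ) := by
  rw [IsMarkov, ← h]
  unfold SAB SBC SABC SB
  congr! 4 <;> (ext; simp only [ptrace_apply]; rfl)

lemma isMarkov_of_condMutualInfo_BC_A [DecidableEq C]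
    (h : SAB τ + SAC τ - SABC τ - SA τ = 0) :
    IsMarkov (Equiv.prodAssoc A B C).symm ((Equiv.prodComm A B).trans (Equiv.prodComm B A))
      (ptrace splitFourth τ) := by
  rw [IsMarkov, ← h]
  unfold SAB SAC SABC SA
  congr! 4 <;> (ext; simp only [ptrace_apply]; rfl)

variable [DecidableEq E]

lemma isMarkov_of_condMutualInfo_AB_E (hτ : τ.PosSemidef)
    (h : SAD τ + SBD τ - SABD τ - SD τ = 0) :
    IsMarkov splitSecond (Equiv.prodComm A E) (ptrace splitThird τ) := by
  have hBE := ptrace_posSemidef (regroup splitSecond (Equiv.prodComm A E))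
    (ptrace_posSemidef splitThird hτ)
  rw [IsMarkov, ← h, ← vNEntropy_submatrix hBE.1 (Equiv.prodComm B E)]
  unfold SAD SBD SABD SD
  congr! 4 <;> (ext; simp only [submatrix_apply, ptrace_apply]; rfl)

lemma ampl_prodAssoc_ampl_prodComm (P : Matrix B B ℂ) :
    ampl (Equiv.prodAssoc A B E).symm (ampl (Equiv.prodComm A B) P) =
      ampl (splitSecond.trans (Equiv.prodComm (A × E) B)) P := by
  ext ⟨a, b, e⟩ ⟨a', b', e'⟩
  by_cases ha : a = a' <;> by_cases he : e = e' <;> simp [ampl_apply, splitSecond, ha, he]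

lemma ampl_prodAssoc_ampl (P : Matrix A A ℂ) :
    ampl (Equiv.prodAssoc A B E).symm (ampl ((Equiv.prodComm A B).trans (Equiv.prodComm B A)) P) =
      ampl splitSecond (ampl ((Equiv.prodComm A E).trans (Equiv.prodComm E A)) P) := by
  ext ⟨a, b, e⟩ ⟨a', b', e'⟩
  by_cases hb : b = b' <;> by_cases he : e = e' <;> simp [ampl_apply, splitSecond, hb, he]

/-- `E` can read the common register of `A` and `B` if `I(A;B|E) = 0`. -/
lemma IsCommonRegister.pairwise_condState_mul_eq_zero {J : Type*} [Fintype J]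
    {PA : J → Matrix A A ℂ} {PB : J → Matrix B B ℂ} {ω : Matrix (A × B × E) (A × B × E) ℂ}
    (hreg : IsCommonRegister (Equiv.prodComm A B) (ptrace (Equiv.prodAssoc A B E).symm ω) PB PA)
    (hω : ω.PosSemidef) (hmarkov : IsMarkov splitSecond (Equiv.prodComm A E) ω) :
    Pairwise fun k l =>
      condState (Equiv.refl _) (PB k) (ptrace (regroup splitSecond (Equiv.prodComm A E)) ω) *
        condState (Equiv.refl _) (PB l) (ptrace (regroup splitSecond (Equiv.prodComm A E)) ω) =
          0 := by
  refine hmarkov.pairwise_condState_mul_eq_zero hω hreg.isStarProjection_right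
    hreg.isStarProjection_left hreg.mul_eq_zero fun k => ?_
  rw [← ampl_prodAssoc_ampl_prodComm, ← ampl_prodAssoc_ampl]
  exact ampl_mul_eq_ampl_mul _ hω (hreg.ampl_mul_eq k)

variable [DecidableEq C]

lemma ptrace_refl_condState_prodComm (P : Matrix B B ℂ) (ω : Matrix (B × C × E) (B × C × E) ℂ) :
    ptrace (Equiv.refl _) (condState (Equiv.prodComm B (C × E)) P ω) =
      condState (Equiv.prodComm B C) P (ptrace (Equiv.prodAssoc B C E).symm ω) := by
  ext c c'
  simp only [ptrace_apply, condState_apply, ← trace_sum, ← Finset.mul_sum]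
  congr 2
  ext b b'
  simp only [Matrix.sum_apply, block, submatrix_apply, ptrace_apply]
  rfl

/-- The purified form of the theorem: `S(C|E) ≤ S(C|AB)`. -/
theorem SCD_sub_SD_le_SABC_sub_SAB (hτ : τ.PosSemidef)
    (hAC_B : SAB τ + SBC τ - SABC τ - SB τ = 0)
    (hBC_A : SAB τ + SAC τ - SABC τ - SA τ = 0)
    (hAB_E : SAD τ + SBD τ - SABD τ - SD τ = 0) :
    SCD τ - SD τ ≤ SABC τ - SAB τ := by
  obtain ⟨J, _, _, PB, PA, hreg, hentropy⟩ :=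
    (isMarkov_of_condMutualInfo_AC_B hAC_B).exists_isCommonRegister
      (isMarkov_of_condMutualInfo_BC_A hBC_A) (ptrace_posSemidef _ hτ)
  rw [ptrace_prodAssoc_ptrace_splitFourth] at hreg
  have horth := hreg.pairwise_condState_mul_eq_zero (ptrace_posSemidef _ hτ)
    (isMarkov_of_condMutualInfo_AB_E hτ hAB_E)
  simp only [← ptrace_regroup_ptrace_prodComm, ← ptrace_condState] at horth
  have hle := vNEntropy_sum_add_vNEntropy_trace_le (Equiv.refl (C × E))
    (fun k => condState_posSemidef _ (hreg.isStarProjection_left k) (ptrace_posSemidef _ hτ)) horth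
  rw [sum_condState _ hreg.sum_eq_one, ← SCD_eq_vNEntropy_ptrace, Equiv.refl_trans,
    ← SD_eq_vNEntropy_ptrace] at hle
  rw [← SBC_eq_vNEntropy_ptrace, ← SB_eq_vNEntropy_ptrace,
    ← ptrace_prodAssoc_ptrace_prodComm] at hentropy
  simp only [← ptrace_refl_condState_prodComm, trace_ptrace] at hentropy
  linarith

end Quadripartite

/-! ### Purification -/

section Purification

lemma vNEntropy_sum_mul_star {x y : Type*} [Fintype x] [DecidableEq x] [Fintype y] [DecidableEq y]
    (M : Matrix x y ℂ) :
    vNEntropy (of fun i i' => ∑ j, M i j * star (M i' j)) =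
      vNEntropy (of fun j j' => ∑ i, M i j * star (M i j')) := by
  have hrow : (of fun i i' => ∑ j, M i j * star (M i' j)) = M * Mᴴ := rfl
  have hcol : (of fun j j' => ∑ i, M i j * star (M i j')) = (Mᴴ * M)ᵀ := by
    ext j j'
    exact Finset.sum_congr rfl fun i _ => mul_comm _ _
  rw [hrow, hcol, vNEntropy_transpose (isHermitian_conjTranspose_mul_self _),
    vNEntropy_mul_conjTranspose]

variable {A B C D E : Type*} [Fintype D]

/-- The `ABCE` marginal of the pure state with amplitudes `ψ` on `ABCD` and the purifying system
`E`; the `ABCD` marginal is `ψ * ψᴴ`. -/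
def purifiedMarginal (ψ : Matrix (A × B × C × D) E ℂ) : Matrix (A × B × C × E) (A × B × C × E) ℂ :=
  of fun p q =>
    ∑ d, ψ (p.1, p.2.1, p.2.2.1, d) p.2.2.2 * star (ψ (q.1, q.2.1, q.2.2.1, d) q.2.2.2)

lemma sum_purifiedMarginal [Fintype E] (ψ : Matrix (A × B × C × D) E ℂ) (a a' : A) (b b' : B)
    (c c' : C) :
    ∑ e, purifiedMarginal ψ (a, b, c, e) (a', b', c', e) =
      ∑ d, (ψ * ψᴴ) (a, b, c, d) (a', b', c', d) :=
  Finset.sum_comm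

lemma purifiedMarginal_posSemidef [Finite A] [Finite B] [Finite C] [Finite E]
    (ψ : Matrix (A × B × C × D) E ℂ) :
    (purifiedMarginal ψ).PosSemidef :=
  posSemidef_self_mul_conjTranspose
    (of fun (p : A × B × C × E) d => ψ (p.1, p.2.1, p.2.2.1, d) p.2.2.2)

variable [Fintype A] [Fintype B] [Fintype C] [Fintype E] (ψ : Matrix (A × B × C × D) E ℂ)

lemma SA_purifiedMarginal [DecidableEq A] : SA (purifiedMarginal ψ) = SA (ψ * ψᴴ) := by
  simp only [SA, sum_purifiedMarginal]

lemma SB_purifiedMarginal [DecidableEq B] : SB (purifiedMarginal ψ) = SB (ψ * ψᴴ) := by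
  simp only [SB, sum_purifiedMarginal]

lemma SAB_purifiedMarginal [DecidableEq A] [DecidableEq B] :
    SAB (purifiedMarginal ψ) = SAB (ψ * ψᴴ) := by
  simp only [SAB, sum_purifiedMarginal]

lemma SAC_purifiedMarginal [DecidableEq A] [DecidableEq C] :
    SAC (purifiedMarginal ψ) = SAC (ψ * ψᴴ) := by
  simp only [SAC, sum_purifiedMarginal]

lemma SBC_purifiedMarginal [DecidableEq B] [DecidableEq C] :
    SBC (purifiedMarginal ψ) = SBC (ψ * ψᴴ) := by
  simp only [SBC, sum_purifiedMarginal]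

lemma SABC_purifiedMarginal [DecidableEq A] [DecidableEq B] [DecidableEq C] :
    SABC (purifiedMarginal ψ) = SABC (ψ * ψᴴ) := by
  simp only [SABC, sum_purifiedMarginal]

variable [DecidableEq A] [DecidableEq B] [DecidableEq C] [DecidableEq D] [DecidableEq E]

lemma SD_purifiedMarginal : SD (purifiedMarginal ψ) = SABCD (ψ * ψᴴ) := by
  have h := vNEntropy_sum_mul_star ψ
  simp only [Fintype.sum_prod_type] at h
  exact h.symm

lemma SAD_purifiedMarginal : SAD (purifiedMarginal ψ) = SBCD (ψ * ψᴴ) := by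
  have h := vNEntropy_sum_mul_star
    (of fun (i : B × C × D) (j : A × E) => ψ (j.1, i.1, i.2.1, i.2.2) j.2)
  simp only [Fintype.sum_prod_type] at h
  exact h.symm

lemma SBD_purifiedMarginal : SBD (purifiedMarginal ψ) = SACD (ψ * ψᴴ) := by
  have h := vNEntropy_sum_mul_star
    (of fun (i : A × C × D) (j : B × E) => ψ (i.1, j.1, i.2.1, i.2.2) j.2)
  simp only [Fintype.sum_prod_type] at h
  exact h.symm

lemma SCD_purifiedMarginal : SCD (purifiedMarginal ψ) = SABD (ψ * ψᴴ) := by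
  have h := vNEntropy_sum_mul_star
    (of fun (i : A × B × D) (j : C × E) => ψ (i.1, i.2.1, j.1, i.2.2) j.2)
  simp only [Fintype.sum_prod_type] at h
  exact h.symm

lemma SABD_purifiedMarginal : SABD (purifiedMarginal ψ) = SCD (ψ * ψᴴ) := by
  have h := vNEntropy_sum_mul_star
    (of fun (i : C × D) (j : A × B × E) => ψ (j.1, j.2.1, i.1, i.2) j.2.2)
  simp only [Fintype.sum_prod_type] at h
  exact h.symm

end Purification

end QuantumMarkov

open QuantumMarkov

/-- **Theorem 1″ (1).** If `I(A;C|B) = 0`, `I(B;C|A) = 0` and `I(A;B|CD) = 0`,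
then `S(C|AB) + S(C|ABD) ≥ 0`. -/
theorem constrained_inequality''_one
    {A B C D : Type*} [Fintype A] [DecidableEq A] [Fintype B] [DecidableEq B]
    [Fintype C] [DecidableEq C] [Fintype D] [DecidableEq D]
    (ρ : Matrix (A × B × C × D) (A × B × C × D) ℂ) (hρ : IsState ρ)
    (h1 : SAB ρ + SBC ρ - SABC ρ - SB ρ = 0)
    (h2 : SAB ρ + SAC ρ - SABC ρ - SA ρ = 0)
    (h3 : SACD ρ + SBCD ρ - SABCD ρ - SCD ρ = 0) :
    0 ≤ (SABC ρ - SAB ρ) + (SABCD ρ - SABD ρ) := by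
  obtain ⟨M, hM⟩ := exists_eq_conjTranspose_mul_self hρ.1
  obtain ⟨ψ, rfl⟩ : ∃ ψ : Matrix (A × B × C × D) (A × B × C × D) ℂ, ρ = ψ * ψ.conjTranspose :=
    ⟨M.conjTranspose, by rw [hM, Matrix.conjTranspose_conjTranspose]⟩
  have hle := SCD_sub_SD_le_SABC_sub_SAB (purifiedMarginal_posSemidef ψ)
    (by rwa [SAB_purifiedMarginal, SBC_purifiedMarginal, SABC_purifiedMarginal,
      SB_purifiedMarginal])
    (by rwa [SAB_purifiedMarginal, SAC_purifiedMarginal, SABC_purifiedMarginal,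
      SA_purifiedMarginal])
    (by rwa [SAD_purifiedMarginal, SBD_purifiedMarginal, SABD_purifiedMarginal,
      SD_purifiedMarginal, add_comm, sub_right_comm])
  rw [SCD_purifiedMarginal, SD_purifiedMarginal, SABC_purifiedMarginal, SAB_purifiedMarginal] at hle
  linarith
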